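/- arXiv:1503.05863 — 2 statements merged into one kernel-verified Lean document; each statement's English description precedes it below -/
import Mathlib

section
/- Let d ≥ 1, 1 < p ≤ 2, and k = 2d(1/p − 1/2). There exists a constant C > 0 such that for every Schwartz function f on ℝ^d: ‖V_g f‖_{L^p(ℝ^{2d})} ≤ C·‖(1−Δ)^{k/2} f‖_{L^p(ℝ^d)}. -/
open MeasureTheory Complex Real
open scoped ENNReal RealInnerProductSpace

noncomputable section

abbrev E (d : ℕ) : Type := EuclideanSpace ℝ (Fin d)

/-- Phase space `ℝ^{2d} = ℝ^d × ℝ^d`. -/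
abbrev P (d : ℕ) : Type := E d × E d

/-- The complex conjugate of the wave packet `π(z)g`, Gaussian window `g(y)=exp(-|y|²/2)`. -/
def pkbar (d : ℕ) (z : P d) (y : E d) : ℂ :=
  Complex.exp (-Complex.I * (⟪y, z.2⟫ : ℂ)) * Real.exp (-‖y - z.1‖ ^ 2 / 2)

/-- The short-time Fourier transform with Gaussian window. -/
def stft (d : ℕ) (u : E d → ℂ) (z : P d) : ℂ := ∫ y, u y * pkbar d z y

/-- The Fourier transform `ℱu(ξ) = ∫ exp(-i x·ξ) u(x) dx`. -/
def FT (d : ℕ) (u : E d → ℂ) (ξ : E d) : ℂ :=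
  ∫ x, Complex.exp (-Complex.I * (⟪x, ξ⟫ : ℂ)) * u x

/-- The Bessel potential `(1-Δ)^{k/2} u = ℱ⁻¹((1+|ξ|²)^{k/2} ℱu)`. -/
def bessel (d : ℕ) (k : ℝ) (u : E d → ℂ) (x : E d) : ℂ :=
  (((2 * π) ^ d : ℝ) : ℂ)⁻¹ *
    ∫ ξ, Complex.exp (Complex.I * (⟪x, ξ⟫ : ℂ)) * (((1 + ‖ξ‖ ^ 2) ^ (k / 2) : ℝ) : ℂ) *
      FT d u ξ

/-!
Paley's inequality `∫ |𝓕F|ᵖ φ^(2-p) ≲ ‖F‖ₚᵖ`, with `φ = (1 + b‖ξ‖²)^(-d/2)` in weak `L¹`, is the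
Marcinkiewicz interpolation (Hörmander) of `F ↦ φ⁻¹ 𝓕F` from Lebesgue measure to `φ² dξ`. Applied to
the Gaussian localisations of `h = (1-Δ)^{k/2} f` and integrated over the localisation point, it
bounds the STFT of `h`, weighted by `(1 + b‖ν‖²)^(-s)`, `s = k/2`, in the frequency `ν`, by `‖h‖ₚ`.
It remains to pass from `h` to `f`. At frequency `ν` the STFT is, up to a modulation, the inverse
Fourier transform of a Gaussian centred at `ν` times the Fourier transform. Split that Gaussian into
two equal factors: one times the Bessel weight `(1 + b‖η‖²)^(-s)` is, by a Gamma integral and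
completing the square, a superposition of Gaussian multipliers, which contract `Lᵖ`, of total mass
`≲ (1 + b‖ν‖²)^(-s)`, so the Bessel weight may be replaced by its value at `ν`.
-/

open Set Filter FourierTransform
open scoped NNReal

section Marcinkiewicz

variable {α β F G : Type*} [MeasurableSpace α] [MeasurableSpace β]
  [NormedAddCommGroup F] [NormedAddCommGroup G] {μ : Measure α} {ν : Measure β}

theorem enorm_rpow_eq_ofReal (x : F) {p : ℝ} (hp : 0 ≤ p) :
    ‖x‖ₑ ^ p = ENNReal.ofReal (‖x‖ ^ p) := by
  rw [← ofReal_norm, ENNReal.ofReal_rpow_of_nonneg (norm_nonneg x) hp]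

theorem lintegral_Ioi_setLIntegral_lt_mul_rpow {f : α → ℝ} (hf : Measurable f) (hf0 : ∀ x, 0 ≤ f x)
    {w : α → ℝ≥0∞} (hw : Measurable w) {r : ℝ} (hr : 0 < r) :
    ∫⁻ t in Ioi 0, (∫⁻ x in {x | t < f x}, w x ∂μ) * ENNReal.ofReal (t ^ (r - 1)) =
      ENNReal.ofReal r⁻¹ * ∫⁻ x, w x * ENNReal.ofReal (f x ^ r) ∂μ := by
  have layer := lintegral_rpow_eq_lintegral_meas_lt_mul (μ.withDensity w)
    (Eventually.of_forall hf0) hf.aemeasurable hr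
  rw [lintegral_withDensity_eq_lintegral_mul _ hw (by fun_prop)] at layer
  simp only [withDensity_apply w (measurableSet_lt measurable_const hf), Pi.mul_apply] at layer
  rw [layer, ← mul_assoc, ← ENNReal.ofReal_mul (by positivity), inv_mul_cancel₀ hr.ne',
    ENNReal.ofReal_one, one_mul]

theorem lintegral_Ioi_indicator_le_mul_rpow {p q : ℝ} (hp : 0 < p) (hpq : p < q) {r : ℝ}
    (hr : 0 ≤ r) :
    ∫⁻ t in Ioi 0, (Ici r).indicator
        (fun t ↦ ENNReal.ofReal (r ^ q) * ENNReal.ofReal (t ^ (p - q - 1))) t =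
      ENNReal.ofReal (q - p)⁻¹ * ENNReal.ofReal (r ^ p) := by
  obtain rfl | hr := hr.eq_or_lt
  · simp [zero_rpow (hp.trans hpq).ne', zero_rpow hp.ne']
  have tail : ∫⁻ t in Ioi r, ENNReal.ofReal (t ^ (p - q - 1)) =
      ENNReal.ofReal (r ^ (p - q) / (q - p)) := by
    rw [← ofReal_integral_eq_lintegral_ofReal (integrableOn_Ioi_rpow_of_lt (by linarith) hr)
      (ae_restrict_of_forall_mem measurableSet_Ioi fun t ht ↦ rpow_nonneg (hr.trans ht).le _),
      integral_Ioi_rpow_of_lt (by linarith) hr, sub_add_cancel, neg_div, ← div_neg, neg_sub]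
  rw [lintegral_indicator measurableSet_Ici, Measure.restrict_restrict measurableSet_Ici,
    inter_eq_left.2 (Ici_subset_Ioi.2 hr), lintegral_const_mul' _ _ ENNReal.ofReal_ne_top,
    ← restrict_Ioi_eq_restrict_Ici, tail, ← ENNReal.ofReal_mul (by positivity),
    ← ENNReal.ofReal_mul (inv_nonneg.2 (by linarith)), mul_div_assoc', ← rpow_add hr,
    add_sub_cancel, div_eq_inv_mul]

theorem lintegral_Ioi_setLIntegral_le_mul_rpow [SFinite μ] {f : α → ℝ} (hf : Measurable f)
    (hf0 : ∀ x, 0 ≤ f x) {p q : ℝ} (hp : 0 < p) (hpq : p < q) :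
    ∫⁻ t in Ioi 0, (∫⁻ x in {x | f x ≤ t}, ENNReal.ofReal (f x ^ q) ∂μ) *
        ENNReal.ofReal (t ^ (p - q - 1)) =
      ENNReal.ofReal (q - p)⁻¹ * ∫⁻ x, ENNReal.ofReal (f x ^ p) ∂μ := by
  have joint : Measurable fun z : ℝ × α ↦ (Ici (f z.2)).indicator
      (fun t ↦ ENNReal.ofReal (f z.2 ^ q) * ENNReal.ofReal (t ^ (p - q - 1))) z.1 := by
    have : Measurable ({z : ℝ × α | f z.2 ≤ z.1}.indicator
        fun z ↦ ENNReal.ofReal (f z.2 ^ q) * ENNReal.ofReal (z.1 ^ (p - q - 1))) :=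
      Measurable.indicator (by fun_prop) (measurableSet_le (by fun_prop) (by fun_prop))
    exact this
  have section_eq (t : ℝ) : (∫⁻ x in {x | f x ≤ t}, ENNReal.ofReal (f x ^ q) ∂μ) *
      ENNReal.ofReal (t ^ (p - q - 1)) = ∫⁻ x, (Ici (f x)).indicator
        (fun t ↦ ENNReal.ofReal (f x ^ q) * ENNReal.ofReal (t ^ (p - q - 1))) t ∂μ := by
    rw [← lintegral_mul_const' _ _ ENNReal.ofReal_ne_top,
      ← lintegral_indicator (measurableSet_le hf measurable_const)]
    rfl
  simp only [section_eq]
  rw [lintegral_lintegral_swap joint.aemeasurable]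
  simp only [lintegral_Ioi_indicator_le_mul_rpow hp hpq (hf0 _)]
  rw [lintegral_const_mul _ (by fun_prop)]

/-- The operator `T`, defined on the class `D` of functions, is of weak type `(p, p)`: this is the
Chebyshev bound a strong type `(p, p)` operator satisfies. The constant `C` bounds the `p`-th power
of the quasinorm. -/
def HasWeakType (T : (α → F) → β → G) (D : Set (α → F)) (p : ℝ) (C : ℝ≥0) (μ : Measure α)
    (ν : Measure β) : Prop :=
  ∀ f ∈ D, ∀ t > 0, ν {y | t < ‖T f y‖} ≤ C * ENNReal.ofReal (t ^ (-p)) * ∫⁻ x, ‖f x‖ₑ ^ p ∂μ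

variable {T : (α → F) → β → G} {D : Set (α → F)} {p₀ p₁ : ℝ} {C₀ C₁ : ℝ≥0}

theorem lintegral_enorm_indicator_rpow (f : α → F) {S : Set α} (hS : MeasurableSet S) {q : ℝ}
    (hq : 0 < q) : ∫⁻ x, ‖S.indicator f x‖ₑ ^ q ∂μ = ∫⁻ x in S, ENNReal.ofReal (‖f x‖ ^ q) ∂μ := by
  rw [← lintegral_indicator hS]
  congr 1 with x
  by_cases hx : x ∈ S
  · simp [hx, enorm_rpow_eq_ofReal, hq.le]
  · simp [hx, hq]

theorem HasWeakType.distribution_le (h₀ : HasWeakType T D p₀ C₀ μ ν)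
    (h₁ : HasWeakType T D p₁ C₁ μ ν) (hp₀ : 0 < p₀) (hp₁ : 0 < p₁)
    (hD : ∀ f ∈ D, ∀ S, MeasurableSet S → S.indicator f ∈ D)
    (hT : ∀ f ∈ D, ∀ g ∈ D, ∀ y, ‖T (f + g) y‖ ≤ ‖T f y‖ + ‖T g y‖)
    {f : α → F} (hf : f ∈ D) (hfm : Measurable fun x ↦ ‖f x‖) {t : ℝ} (ht : 0 < t) :
    ν {y | t < ‖T f y‖} ≤
      C₀ * ENNReal.ofReal ((t / 2) ^ (-p₀)) *
          ∫⁻ x in {x | t < ‖f x‖}, ENNReal.ofReal (‖f x‖ ^ p₀) ∂μ +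
        C₁ * ENNReal.ofReal ((t / 2) ^ (-p₁)) *
          ∫⁻ x in {x | ‖f x‖ ≤ t}, ENNReal.ofReal (‖f x‖ ^ p₁) ∂μ := by
  have hS : MeasurableSet {x | t < ‖f x‖} := measurableSet_lt measurable_const hfm
  have hS' : MeasurableSet {x | ‖f x‖ ≤ t} := measurableSet_le hfm measurable_const
  have split : {x | t < ‖f x‖}.indicator f + {x | ‖f x‖ ≤ t}.indicator f = f := by
    have : {x | ‖f x‖ ≤ t} = {x | t < ‖f x‖}ᶜ := by ext; simp
    rw [this, indicator_self_add_compl]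
  have cover : {y | t < ‖T f y‖} ⊆ {y | t / 2 < ‖T ({x | t < ‖f x‖}.indicator f) y‖} ∪
      {y | t / 2 < ‖T ({x | ‖f x‖ ≤ t}.indicator f) y‖} := by
    intro y hy
    have := hT _ (hD f hf _ hS) _ (hD f hf _ hS') y
    rw [split] at this
    by_contra! hcon
    simp only [mem_union, mem_ofPred_eq, not_or, not_lt] at hcon hy
    linarith [hcon.1, hcon.2]
  refine (measure_mono cover).trans ((measure_union_le _ _).trans (add_le_add ?_ ?_))
  · simpa only [lintegral_enorm_indicator_rpow f hS hp₀] using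
      h₀ _ (hD f hf _ hS) (t / 2) (by positivity)
  · simpa only [lintegral_enorm_indicator_rpow f hS' hp₁] using
      h₁ _ (hD f hf _ hS') (t / 2) (by positivity)

theorem ofReal_div_two_rpow_mul_rpow {t : ℝ} (ht : 0 < t) (q r : ℝ) :
    ENNReal.ofReal ((t / 2) ^ (-q)) * ENNReal.ofReal (t ^ r) =
      ENNReal.ofReal (2 ^ q) * ENNReal.ofReal (t ^ (r - q)) := by
  rw [← ENNReal.ofReal_mul (by positivity), ← ENNReal.ofReal_mul (by positivity),
    div_rpow ht.le (by norm_num), rpow_neg (by norm_num : (0 : ℝ) ≤ 2), sub_eq_add_neg,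
    rpow_add ht]
  congr 1
  field_simp

theorem HasWeakType.distribution_mul_rpow_le (h₀ : HasWeakType T D p₀ C₀ μ ν)
    (h₁ : HasWeakType T D p₁ C₁ μ ν) (hp₀ : 0 < p₀) (hp₁ : 0 < p₁)
    (hD : ∀ f ∈ D, ∀ S, MeasurableSet S → S.indicator f ∈ D)
    (hT : ∀ f ∈ D, ∀ g ∈ D, ∀ y, ‖T (f + g) y‖ ≤ ‖T f y‖ + ‖T g y‖)
    {f : α → F} (hf : f ∈ D) (hfm : Measurable fun x ↦ ‖f x‖) {t : ℝ} (ht : 0 < t) (p : ℝ) :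
    ν {y | t < ‖T f y‖} * ENNReal.ofReal (t ^ (p - 1)) ≤
      C₀ * ENNReal.ofReal (2 ^ p₀) * ((∫⁻ x in {x | t < ‖f x‖}, ENNReal.ofReal (‖f x‖ ^ p₀) ∂μ) *
          ENNReal.ofReal (t ^ (p - p₀ - 1))) +
        C₁ * ENNReal.ofReal (2 ^ p₁) * ((∫⁻ x in {x | ‖f x‖ ≤ t}, ENNReal.ofReal (‖f x‖ ^ p₁) ∂μ) *
          ENNReal.ofReal (t ^ (p - p₁ - 1))) := by
  refine (mul_le_mul_left (h₀.distribution_le h₁ hp₀ hp₁ hD hT hf hfm ht) _).trans_eq ?_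
  have e₀ := ofReal_div_two_rpow_mul_rpow ht p₀ (p - 1)
  have e₁ := ofReal_div_two_rpow_mul_rpow ht p₁ (p - 1)
  rw [sub_right_comm] at e₀ e₁
  rw [add_mul, mul_right_comm, mul_assoc _ _ (ENNReal.ofReal (t ^ (p - 1))), e₀,
    mul_right_comm (C₁ * _ : ℝ≥0∞), mul_assoc (C₁ : ℝ≥0∞) _ (ENNReal.ofReal (t ^ (p - 1))), e₁]
  ring

theorem lintegral_Ioi_setLIntegral_lt_norm_mul_rpow {f : α → F} (hf : Measurable fun x ↦ ‖f x‖)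
    {p q : ℝ} (hq : 0 ≤ q) (hqp : q < p) :
    ∫⁻ t in Ioi 0, (∫⁻ x in {x | t < ‖f x‖}, ENNReal.ofReal (‖f x‖ ^ q) ∂μ) *
        ENNReal.ofReal (t ^ (p - q - 1)) = ENNReal.ofReal (p - q)⁻¹ * ∫⁻ x, ‖f x‖ₑ ^ p ∂μ := by
  rw [lintegral_Ioi_setLIntegral_lt_mul_rpow hf (fun x ↦ norm_nonneg _) (by fun_prop)
    (sub_pos.2 hqp)]
  congr 2 with x
  rw [← ofReal_norm, ← ENNReal.ofReal_rpow_of_nonneg (norm_nonneg _) hq,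
    ← ENNReal.ofReal_rpow_of_nonneg (norm_nonneg _) (sub_pos.2 hqp).le,
    ← ENNReal.rpow_add_of_nonneg _ _ hq (sub_pos.2 hqp).le, add_sub_cancel]

theorem HasWeakType.lintegral_enorm_rpow_le [SFinite μ] (h₀ : HasWeakType T D p₀ C₀ μ ν)
    (h₁ : HasWeakType T D p₁ C₁ μ ν) {p : ℝ} (hp₀ : 0 < p₀) (hp : p₀ < p) (hp₁ : p < p₁)
    (hD : ∀ f ∈ D, ∀ S, MeasurableSet S → S.indicator f ∈ D)
    (hT : ∀ f ∈ D, ∀ g ∈ D, ∀ y, ‖T (f + g) y‖ ≤ ‖T f y‖ + ‖T g y‖)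
    {f : α → F} (hf : f ∈ D) (hfm : Measurable fun x ↦ ‖f x‖) (hTf : AEStronglyMeasurable (T f) ν) :
    ∫⁻ y, ‖T f y‖ₑ ^ p ∂ν ≤
      ENNReal.ofReal p * (C₀ * ENNReal.ofReal (2 ^ p₀) * ENNReal.ofReal (p - p₀)⁻¹ +
        C₁ * ENNReal.ofReal (2 ^ p₁) * ENNReal.ofReal (p₁ - p)⁻¹) * ∫⁻ x, ‖f x‖ₑ ^ p ∂μ := by
  have hp0 : 0 < p := hp₀.trans hp
  have measurable_I₀ : Measurable fun t : ℝ ↦ (∫⁻ x in {x | t < ‖f x‖},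
      ENNReal.ofReal (‖f x‖ ^ p₀) ∂μ) * ENNReal.ofReal (t ^ (p - p₀ - 1)) :=
    Antitone.measurable (fun s t hst ↦ lintegral_mono_set fun x (hx : t < ‖f x‖) ↦
      hst.trans_lt hx) |>.mul (by fun_prop)
  calc
    _ = ENNReal.ofReal p *
        ∫⁻ t in Ioi 0, ν {y | t < ‖T f y‖} * ENNReal.ofReal (t ^ (p - 1)) := by
      simp only [enorm_rpow_eq_ofReal _ hp0.le]
      exact lintegral_rpow_eq_lintegral_meas_lt_mul ν
        (Eventually.of_forall fun _ ↦ norm_nonneg _) hTf.norm.aemeasurable hp0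
    _ ≤ ENNReal.ofReal p * (C₀ * ENNReal.ofReal (2 ^ p₀) *
          (ENNReal.ofReal (p - p₀)⁻¹ * ∫⁻ x, ‖f x‖ₑ ^ p ∂μ) +
        C₁ * ENNReal.ofReal (2 ^ p₁) * (ENNReal.ofReal (p₁ - p)⁻¹ * ∫⁻ x, ‖f x‖ₑ ^ p ∂μ)) := by
      gcongr 1
      refine (setLIntegral_mono' measurableSet_Ioi fun t ht ↦ h₀.distribution_mul_rpow_le h₁ hp₀
        (hp0.trans hp₁) hD hT hf hfm ht p).trans_eq ?_
      rw [lintegral_add_left (measurable_I₀.const_mul _), lintegral_const_mul' _ _ (by finiteness),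
        lintegral_const_mul' _ _ (by finiteness), lintegral_Ioi_setLIntegral_lt_norm_mul_rpow hfm
        hp₀.le hp, lintegral_Ioi_setLIntegral_le_mul_rpow hfm (fun x ↦ norm_nonneg _) hp0 hp₁]
      simp only [enorm_rpow_eq_ofReal _ hp0.le]
    _ = _ := by ring

end Marcinkiewicz

section Paley

variable {V : Type*} [NormedAddCommGroup V] [InnerProductSpace ℝ V] [FiniteDimensional ℝ V]
  [MeasurableSpace V] [BorelSpace V]

theorem continuous_fourier {F : V → ℂ} (hF : Integrable F) : Continuous (𝓕 F) :=
  VectorFourier.fourierIntegral_continuous continuous_fourierChar continuous_inner hF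

theorem coeFn_fourier_toLp {F : V → ℂ} (h₁ : Integrable F) (h₂ : MemLp F 2) :
    ((𝓕 (h₂.toLp F) : Lp (α := V) ℂ 2) : V → ℂ) =ᵐ[volume] 𝓕 F := by
  refine ae_eq_of_integral_contDiff_smul_eq ((Lp.memLp _).locallyIntegrable (by norm_num))
    (continuous_fourier h₁).locallyIntegrable fun g hg hgs ↦ ?_
  have hgs' : HasCompactSupport fun x ↦ (g x : ℂ) := hgs.comp_left (g := Complex.ofReal) (by simp)
  have hg' : ContDiff ℝ (⊤ : ℕ∞) fun x ↦ (g x : ℂ) := Complex.ofRealCLM.contDiff.comp hg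
  set φ : SchwartzMap V ℂ := hgs'.toSchwartzMap hg'
  have hφ (x : V) : φ x = g x := rfl
  have pairing := congrArg (· φ) (Lp.fourier_toTemperedDistribution_eq (h₂.toLp F))
  simp only [TemperedDistribution.fourier_apply, Lp.toTemperedDistribution_apply] at pairing
  have duality : ∫ x, 𝓕 F x • φ x = ∫ x, F x • 𝓕 (φ : V → ℂ) x := by
    simpa using! VectorFourier.integral_fourierIntegral_smul_eq_flip (L := innerₗ V)
      continuous_fourierChar continuous_inner h₁ φ.integrable
  simp only [← Complex.coe_smul, ← hφ]
  rw [← pairing]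
  simp only [smul_eq_mul, mul_comm (φ _)] at duality ⊢
  rw [duality]
  refine integral_congr_ae ?_
  filter_upwards [h₂.coeFn_toLp] with x hx
  rw [hx, SchwartzMap.fourier_coe, mul_comm]

theorem lintegral_enorm_fourier_sq {F : V → ℂ} (h₁ : Integrable F) (h₂ : MemLp F 2) :
    ∫⁻ ξ, ‖𝓕 F ξ‖ₑ ^ (2 : ℝ) = ∫⁻ x, ‖F x‖ₑ ^ (2 : ℝ) := by
  have isometry := Lp.norm_fourier_eq (h₂.toLp F)
  rw [Lp.norm_def, Lp.norm_def, ENNReal.toReal_eq_toReal_iff' (Lp.eLpNorm_ne_top _)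
    (Lp.eLpNorm_ne_top _), eLpNorm_congr_ae (coeFn_fourier_toLp h₁ h₂),
    eLpNorm_congr_ae h₂.coeFn_toLp] at isometry
  have sq_eLpNorm (u : V → ℂ) : eLpNorm u 2 volume ^ (2 : ℝ) = ∫⁻ x, ‖u x‖ₑ ^ (2 : ℝ) := by
    rw [eLpNorm_eq_lintegral_rpow_enorm_toReal (by norm_num) (by norm_num), ← ENNReal.rpow_mul]
    simp
  rw [← sq_eLpNorm, isometry, sq_eLpNorm]

theorem setLIntegral_sq_le_of_forall_measure_lt_le {α : Type*} [MeasurableSpace α] {μ : Measure α}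
    {φ : α → ℝ} (hφ : Measurable φ) (hφ0 : ∀ x, 0 ≤ φ x) {c : ℝ≥0}
    (hc : ∀ s > 0, μ {x | s < φ x} ≤ c * ENNReal.ofReal s⁻¹) (a : ℝ) :
    ∫⁻ x in {x | φ x ≤ a}, ENNReal.ofReal (φ x ^ 2) ∂μ ≤ 2 * c * ENNReal.ofReal a := by
  have hS : MeasurableSet {x | φ x ≤ a} := measurableSet_le hφ measurable_const
  set ψ := {x | φ x ≤ a}.indicator φ
  have layer := lintegral_rpow_eq_lintegral_meas_lt_mul μ (f := ψ)
    (Eventually.of_forall fun x ↦ indicator_nonneg (fun x _ ↦ hφ0 x) x)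
    (hφ.indicator hS).aemeasurable (p := 2) (by norm_num)
  have level : ∀ t ∈ Ioi (0 : ℝ), μ {x | t < ψ x} * ENNReal.ofReal (t ^ (2 - 1 : ℝ)) ≤
      (Ioc 0 a).indicator (fun _ ↦ (c : ℝ≥0∞)) t := by
    intro t (ht : 0 < t)
    have lt_iff (x : α) : t < ψ x ↔ t < φ x ∧ φ x ≤ a := by
      by_cases hx : φ x ≤ a <;> simp [ψ, hx, ht.le]
    by_cases hta : t ≤ a
    · rw [indicator_of_mem (mem_Ioc.2 ⟨ht, hta⟩)]
      calc
        _ ≤ c * ENNReal.ofReal t⁻¹ * ENNReal.ofReal (t ^ (2 - 1 : ℝ)) := by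
          gcongr
          exact (measure_mono fun x hx ↦ ((lt_iff x).1 hx).1).trans (hc t ht)
        _ = c := by
          rw [mul_assoc, ← ENNReal.ofReal_mul (by positivity)]
          norm_num [ht.ne']
    · have : {x | t < ψ x} = ∅ := eq_empty_of_forall_notMem fun x hx ↦
        hta (((lt_iff x).1 hx).1.le.trans ((lt_iff x).1 hx).2)
      simp [this]
  calc
    _ = ∫⁻ x, ENNReal.ofReal (ψ x ^ (2 : ℝ)) ∂μ := by
      rw [← lintegral_indicator hS]
      congr 1 with x
      by_cases hx : φ x ≤ a <;> simp [ψ, indicator, hx]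
    _ ≤ ENNReal.ofReal 2 * ∫⁻ t in Ioi 0, (Ioc 0 a).indicator (fun _ ↦ (c : ℝ≥0∞)) t := by
      rw [layer]
      gcongr 1
      exact setLIntegral_mono' measurableSet_Ioi level
    _ ≤ ENNReal.ofReal 2 * ∫⁻ t, (Ioc 0 a).indicator (fun _ ↦ (c : ℝ≥0∞)) t := by
      gcongr 1
      exact setLIntegral_le_lintegral _ _
    _ = 2 * c * ENNReal.ofReal a := by
      simp [mul_assoc]

/-- The measure `φ(ξ)² dξ` of Hörmander's proof of the Paley inequality. -/
def paleyMeasure (φ : V → ℝ) : Measure V := volume.withDensity fun ξ ↦ ENNReal.ofReal (φ ξ ^ 2)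

/-- The operator `F ↦ φ⁻¹ 𝓕F` of Hörmander's proof of the Paley inequality; its `Lᵖ` norm with
respect to `paleyMeasure φ` is the `Lᵖ` norm of `𝓕F` with the weight `φ^(2-p)`. -/
def paleyOperator (φ : V → ℝ) (F : V → ℂ) (ξ : V) : ℂ := (φ ξ)⁻¹ • 𝓕 F ξ

/-- The class `L¹ ∩ L²`, on which the Fourier transform is an absolutely convergent integral and
Plancherel's theorem holds. -/
def integrableMemLpTwo (V : Type*) [NormedAddCommGroup V] [InnerProductSpace ℝ V]
    [FiniteDimensional ℝ V] [MeasurableSpace V] [BorelSpace V] : Set (V → ℂ) :=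
  {F | Integrable F ∧ MemLp F 2}

variable {φ : V → ℝ}

theorem measurable_paleyOperator (hφ : Measurable φ) {F : V → ℂ} (hF : Integrable F) :
    Measurable (paleyOperator φ F) :=
  hφ.inv.smul (continuous_fourier hF).measurable

theorem norm_paleyOperator_add_le {F G : V → ℂ} (hF : Integrable F)
    (hG : Integrable G) (ξ : V) :
    ‖paleyOperator φ (F + G) ξ‖ ≤ ‖paleyOperator φ F ξ‖ + ‖paleyOperator φ G ξ‖ := by
  have fourier_add : 𝓕 (F + G) = 𝓕 F + 𝓕 G :=
    VectorFourier.fourierIntegral_add continuous_fourierChar continuous_inner hF hG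
  rw [paleyOperator, fourier_add, Pi.add_apply, smul_add]
  exact norm_add_le _ _

theorem lintegral_enorm_paleyOperator_rpow (hφ : Measurable φ) (hφ0 : ∀ ξ, 0 < φ ξ) {F : V → ℂ}
    (hF : Integrable F) {p : ℝ} (hp : 0 ≤ p) :
    ∫⁻ ξ, ‖paleyOperator φ F ξ‖ₑ ^ p ∂paleyMeasure φ =
      ∫⁻ ξ, ENNReal.ofReal (φ ξ ^ (2 - p)) * ‖𝓕 F ξ‖ₑ ^ p := by
  have := measurable_paleyOperator hφ hF
  rw [paleyMeasure, lintegral_withDensity_eq_lintegral_mul _ (by fun_prop) (by fun_prop)]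
  congr 1 with ξ
  rw [Pi.mul_apply, paleyOperator, enorm_smul, ENNReal.mul_rpow_of_nonneg _ _ hp, ← mul_assoc,
    enorm_inv (hφ0 ξ).ne', Real.enorm_eq_ofReal (hφ0 ξ).le, ← ENNReal.ofReal_inv_of_pos (hφ0 ξ),
    ENNReal.ofReal_rpow_of_nonneg (inv_nonneg.2 (hφ0 ξ).le) hp,
    ← ENNReal.ofReal_mul (by positivity), inv_rpow (hφ0 ξ).le, rpow_sub (hφ0 ξ), rpow_two,
    div_eq_mul_inv]

theorem hasWeakType_one_paleyOperator (hφ : Measurable φ) (hφ0 : ∀ ξ, 0 < φ ξ) {c : ℝ≥0}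
    (hc : ∀ s > 0, volume {ξ | s < φ ξ} ≤ c * ENNReal.ofReal s⁻¹) :
    HasWeakType (paleyOperator φ) (integrableMemLpTwo V) 1 (2 * c) volume (paleyMeasure φ) := by
  intro F hF t ht
  have sub : {ξ | t < ‖paleyOperator φ F ξ‖} ⊆ {ξ | φ ξ ≤ t⁻¹ * ∫ x, ‖F x‖} := by
    intro ξ (hξ : t < ‖(φ ξ)⁻¹ • 𝓕 F ξ‖)
    have sup_bound : ‖𝓕 F ξ‖ ≤ ∫ x, ‖F x‖ :=
      VectorFourier.norm_fourierIntegral_le_integral_norm _ _ _ _ _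
    rw [norm_smul, norm_inv, norm_of_nonneg (hφ0 ξ).le, lt_inv_mul_iff₀ (hφ0 ξ)] at hξ
    rw [mem_ofPred_eq, le_inv_mul_iff₀ ht]
    linarith
  calc
    _ ≤ ∫⁻ ξ in {ξ | φ ξ ≤ t⁻¹ * ∫ x, ‖F x‖}, ENNReal.ofReal (φ ξ ^ 2) := by
      refine (measure_mono sub).trans_eq ?_
      rw [paleyMeasure, withDensity_apply _ (measurableSet_le hφ measurable_const)]
    _ ≤ 2 * c * ENNReal.ofReal (t⁻¹ * ∫ x, ‖F x‖) :=
      setLIntegral_sq_le_of_forall_measure_lt_le hφ (fun ξ ↦ (hφ0 ξ).le) hc _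
    _ = _ := by
      simp only [ENNReal.ofReal_mul (inv_nonneg.2 ht.le),
        ofReal_integral_norm_eq_lintegral_enorm hF.1, ENNReal.rpow_one, rpow_neg_one,
        mul_assoc, ENNReal.coe_mul, ENNReal.coe_ofNat]

theorem hasWeakType_two_paleyOperator (hφ : Measurable φ) (hφ0 : ∀ ξ, 0 < φ ξ) :
    HasWeakType (paleyOperator φ) (integrableMemLpTwo V) 2 1 volume (paleyMeasure φ) := by
  intro F hF t ht
  have := measurable_paleyOperator hφ hF.1
  calc
    _ ≤ paleyMeasure φ {ξ | ENNReal.ofReal (t ^ (2 : ℝ)) ≤ ‖paleyOperator φ F ξ‖ₑ ^ (2 : ℝ)} := by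
      refine measure_mono fun ξ (hξ : t < _) ↦ ?_
      rw [mem_ofPred_eq, ← ENNReal.ofReal_rpow_of_pos ht, ← ofReal_norm]
      gcongr
    _ ≤ (∫⁻ ξ, ‖paleyOperator φ F ξ‖ₑ ^ (2 : ℝ) ∂paleyMeasure φ) / ENNReal.ofReal (t ^ (2 : ℝ)) :=
      meas_ge_le_lintegral_div (by fun_prop) (by simpa using ht.ne') (by simp)
    _ = _ := by
      rw [lintegral_enorm_paleyOperator_rpow hφ hφ0 hF.1 zero_le_two, ENNReal.div_eq_inv_mul,
        ← ENNReal.ofReal_inv_of_pos (by positivity), ← rpow_neg ht.le]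
      simp only [sub_self, rpow_zero, ENNReal.ofReal_one, one_mul, ENNReal.coe_one,
        lintegral_enorm_fourier_sq hF.1 hF.2]

theorem paley_inequality (hφ : Measurable φ) (hφ0 : ∀ ξ, 0 < φ ξ)
    {c : ℝ≥0} (hc : ∀ s > 0, volume {ξ | s < φ ξ} ≤ c * ENNReal.ofReal s⁻¹) {p : ℝ} (hp1 : 1 < p)
    (hp2 : p ≤ 2) :
    ∃ C : ℝ≥0, ∀ F : V → ℂ, Integrable F → MemLp F 2 →
      ∫⁻ ξ, ENNReal.ofReal (φ ξ ^ (2 - p)) * ‖𝓕 F ξ‖ₑ ^ p ≤ C * ∫⁻ x, ‖F x‖ₑ ^ p := by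
  rcases hp2.eq_or_lt with rfl | hp2
  · refine ⟨1, fun F h₁ h₂ ↦ ?_⟩
    simp only [sub_self, rpow_zero, ENNReal.ofReal_one, one_mul, ENNReal.coe_one,
      lintegral_enorm_fourier_sq h₁ h₂, le_refl]
  set C : ℝ≥0∞ := ENNReal.ofReal p * ((2 * c : ℝ≥0) * ENNReal.ofReal (2 ^ (1 : ℝ)) *
    ENNReal.ofReal (p - 1)⁻¹ + (1 : ℝ≥0) * ENNReal.ofReal (2 ^ (2 : ℝ)) * ENNReal.ofReal (2 - p)⁻¹)
  have strong {F : V → ℂ} (h : F ∈ integrableMemLpTwo V) (hm : StronglyMeasurable F) :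
      ∫⁻ ξ, ENNReal.ofReal (φ ξ ^ (2 - p)) * ‖𝓕 F ξ‖ₑ ^ p ≤ C * ∫⁻ x, ‖F x‖ₑ ^ p := by
    rw [← lintegral_enorm_paleyOperator_rpow hφ hφ0 h.1 (by linarith)]
    exact (hasWeakType_one_paleyOperator hφ hφ0 hc).lintegral_enorm_rpow_le
      (hasWeakType_two_paleyOperator hφ hφ0) one_pos hp1 hp2
      (fun F hF S hS ↦ ⟨hF.1.indicator hS, hF.2.indicator hS⟩)
      (fun F hF G hG ↦ norm_paleyOperator_add_le hF.1 hG.1) h hm.norm.measurable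
      (measurable_paleyOperator hφ h.1).aestronglyMeasurable
  lift C to ℝ≥0 using by finiteness with C'
  refine ⟨C', fun F h₁ h₂ ↦ ?_⟩
  obtain ⟨G, hG, hFG⟩ := h₁.aestronglyMeasurable
  have fourier_eq : 𝓕 F = 𝓕 G := funext (Real.fourier_congr_ae hFG)
  have norm_eq : ∫⁻ x, ‖F x‖ₑ ^ p = ∫⁻ x, ‖G x‖ₑ ^ p :=
    lintegral_congr_ae (hFG.fun_comp (‖·‖ₑ ^ p))
  rw [fourier_eq, norm_eq]
  exact strong ⟨h₁.congr hFG, h₂.ae_eq hFG⟩ hG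

theorem exists_volume_lt_japanese_le [Nontrivial V] {b : ℝ} (hb : 0 < b) : ∃ c : ℝ≥0, ∀ s > 0,
    volume {ξ : V | s < (1 + b * ‖ξ‖ ^ 2) ^ (-(Module.finrank ℝ V : ℝ) / 2)} ≤
      c * ENNReal.ofReal s⁻¹ := by
  set n := Module.finrank ℝ V
  have hn : 0 < n := Module.finrank_pos
  obtain ⟨a, ha, rfl⟩ : ∃ a > 0, a ^ 2 = b := ⟨√b, sqrt_pos.2 hb, sq_sqrt hb.le⟩
  simp only [← mul_pow]
  refine ⟨((a ^ n)⁻¹).toNNReal * (volume (Metric.ball (0 : V) 1)).toNNReal, fun s hs ↦ ?_⟩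
  have sub : {ξ : V | s < (1 + (a * ‖ξ‖) ^ 2) ^ (-(n : ℝ) / 2)} ⊆
      Metric.ball 0 (a⁻¹ * s ^ (-(n : ℝ)⁻¹)) := by
    intro ξ (hξ : s < _)
    have lt : (1 + (a * ‖ξ‖) ^ 2) ^ ((n : ℝ) / 2) < s⁻¹ := by
      rw [lt_inv_comm₀ (by positivity) hs, ← rpow_neg (by positivity), ← neg_div]
      exact hξ
    have le : (a * ‖ξ‖) ^ n ≤ (1 + (a * ‖ξ‖) ^ 2) ^ ((n : ℝ) / 2) := by
      calc
        _ = ((a * ‖ξ‖) ^ 2) ^ ((n : ℝ) / 2) := by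
          rw [← rpow_natCast_mul (by positivity), Nat.cast_ofNat, mul_div_cancel₀ _ two_ne_zero,
            rpow_natCast]
        _ ≤ _ := by gcongr; simp
    have := rpow_lt_rpow (by positivity) (le.trans_lt lt) (inv_pos.2 (Nat.cast_pos (α := ℝ).2 hn))
    rw [pow_rpow_inv_natCast (by positivity) hn.ne', inv_rpow hs.le, ← rpow_neg hs.le,
      ← lt_inv_mul_iff₀ ha] at this
    simpa using this
  refine (measure_mono sub).trans_eq ?_
  rw [Measure.addHaar_ball _ _ (by positivity), mul_pow, ← rpow_natCast (s ^ _), ← rpow_mul hs.le,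
    neg_mul, inv_mul_cancel₀ (by positivity), rpow_neg_one, ENNReal.ofReal_mul (by positivity),
    ENNReal.coe_mul, ENNReal.coe_toNNReal measure_ball_lt_top.ne, inv_pow, mul_right_comm]
  rfl

end Paley

section Multipliers

variable {α β : Type*} [MeasurableSpace α] [MeasurableSpace β] {μ : Measure α} {ν : Measure β}

theorem rpow_lintegral_mul_le {ρ G : α → ℝ≥0∞} (hρ : AEMeasurable ρ μ) (hG : AEMeasurable G μ)
    {p : ℝ} (hp : 1 ≤ p) :
    (∫⁻ t, ρ t * G t ∂μ) ^ p ≤ (∫⁻ t, ρ t ∂μ) ^ (p - 1) * ∫⁻ t, ρ t * G t ^ p ∂μ := by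
  have hp0 : 0 < p := by linarith
  have hp' : 0 ≤ 1 - p⁻¹ := sub_nonneg.2 (inv_le_one_of_one_le₀ hp)
  have factor (t : α) : ρ t ^ (1 - p⁻¹) * (ρ t * G t ^ p) ^ p⁻¹ = ρ t * G t := by
    rw [ENNReal.mul_rpow_of_nonneg _ _ (by positivity), ENNReal.rpow_rpow_inv hp0.ne', ← mul_assoc,
      ← ENNReal.rpow_add_of_nonneg _ _ hp' (by positivity), sub_add_cancel, ENNReal.rpow_one]
  have holder := ENNReal.lintegral_mul_norm_pow_le hρ (hρ.mul (hG.pow_const p)) hp'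
    (inv_nonneg.2 hp0.le) (sub_add_cancel _ _)
  simp only [Pi.mul_apply, factor] at holder
  refine (ENNReal.rpow_le_rpow holder hp0.le).trans_eq ?_
  rw [ENNReal.mul_rpow_of_nonneg _ _ hp0.le, ENNReal.rpow_inv_rpow hp0.ne', ← ENNReal.rpow_mul,
    sub_mul, one_mul, inv_mul_cancel₀ hp0.ne']

theorem lintegral_rpow_lintegral_mul_le [SFinite μ] [SFinite ν] {ρ : α → ℝ≥0∞} (hρ : Measurable ρ)
    {G : α → β → ℝ≥0∞} (hG : Measurable (Function.uncurry G)) {p : ℝ} (hp : 1 ≤ p) {K : ℝ≥0∞}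
    (hK : ∀ᵐ t ∂μ, ∫⁻ x, G t x ^ p ∂ν ≤ K) :
    ∫⁻ x, (∫⁻ t, ρ t * G t x ∂μ) ^ p ∂ν ≤ (∫⁻ t, ρ t ∂μ) ^ p * K := by
  have joint : Measurable fun z : β × α ↦ ρ z.2 * G z.2 z.1 ^ p :=
    (hρ.comp measurable_snd).mul ((hG.comp measurable_swap).pow_const p)
  calc
    _ ≤ ∫⁻ x, (∫⁻ t, ρ t ∂μ) ^ (p - 1) * ∫⁻ t, ρ t * G t x ^ p ∂μ ∂ν :=
      lintegral_mono fun x ↦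
        rpow_lintegral_mul_le hρ.aemeasurable hG.of_uncurry_right.aemeasurable hp
    _ = (∫⁻ t, ρ t ∂μ) ^ (p - 1) * ∫⁻ t, ρ t * ∫⁻ x, G t x ^ p ∂ν ∂μ := by
      rw [lintegral_const_mul _ joint.lintegral_prod_right', lintegral_lintegral_swap
        joint.aemeasurable]
      simp only [lintegral_const_mul _ (hG.of_uncurry_left.pow_const p)]
    _ ≤ (∫⁻ t, ρ t ∂μ) ^ (p - 1) * ∫⁻ t, ρ t * K ∂μ := by
      gcongr 1
      refine lintegral_mono_ae ?_
      filter_upwards [hK] with t ht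
      gcongr
    _ = _ := by
      rw [lintegral_mul_const _ hρ, ← mul_assoc]
      congr 1
      nth_rw 2 [← ENNReal.rpow_one (∫⁻ t, ρ t ∂μ)]
      rw [← ENNReal.rpow_add_of_nonneg _ _ (sub_nonneg.2 hp) zero_le_one, sub_add_cancel]

variable {V : Type*} [NormedAddCommGroup V] [InnerProductSpace ℝ V] [FiniteDimensional ℝ V]
  [MeasurableSpace V] [BorelSpace V] {W : V → ℂ}

theorem fourierInv_integral_mul [SFinite μ] {ρ : α → ℝ} (hρ : Integrable ρ μ) {N : α → V → ℂ}
    (hN : Measurable (Function.uncurry N)) (hN1 : ∀ᵐ t ∂μ, ∀ η, ‖N t η‖ ≤ 1)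
    (hW : Integrable W) (x : V) :
    𝓕⁻ (fun η ↦ (∫ t, ρ t * N t η ∂μ) * W η) x =
      ∫ t, ρ t * 𝓕⁻ (fun η ↦ N t η * W η) x ∂μ := by
  have integrable : Integrable (fun z : V × α ↦
      (𝐞 ⟪z.1, x⟫ * N z.2 z.1) * (W z.1 * (ρ z.2 : ℂ))) (volume.prod μ) := by
    refine (hW.mul_prod hρ.ofReal).bdd_mul (c := 1) ?_ ?_
    · refine Measurable.aestronglyMeasurable (Measurable.mul ?_ (hN.comp measurable_swap))
      exact (continuous_subtype_val.comp continuous_fourierChar).measurable.comp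
        (measurable_fst.inner_const (𝕜 := ℝ))
    · filter_upwards [Measure.quasiMeasurePreserving_snd.ae hN1] with z hz
      simpa only [norm_mul, Circle.norm_coe, one_mul] using hz z.1
  simp only [Real.fourierInv_eq, Circle.smul_def, smul_eq_mul]
  calc
    _ = ∫ η, ∫ t, (𝐞 ⟪η, x⟫ * N t η) * (W η * (ρ t : ℂ)) ∂μ := by
      congr 1 with η
      rw [← integral_mul_const, ← integral_const_mul]
      congr 1 with t
      ring
    _ = _ := by
      rw [integral_integral_swap integrable]
      congr 1 with t
      rw [← integral_const_mul]
      congr 1 with η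
      ring

theorem measurable_fourierInv_mul {N : α → V → ℂ} (hN : Measurable (Function.uncurry N))
    (hW : Measurable W) : Measurable fun z : α × V ↦ 𝓕⁻ (fun η ↦ N z.1 η * W η) z.2 := by
  simp only [Real.fourierInv_eq, Circle.smul_def, smul_eq_mul]
  refine (StronglyMeasurable.integral_prod_right' (f := fun q : (α × V) × V ↦
    (𝐞 ⟪q.2, q.1.2⟫ : ℂ) * (N q.1.1 q.2 * W q.2)) (Measurable.stronglyMeasurable ?_)).measurable
  refine Measurable.mul ?_ (Measurable.mul ?_ (hW.comp measurable_snd))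
  · exact (continuous_subtype_val.comp continuous_fourierChar).measurable.comp
      ((continuous_inner (𝕜 := ℝ)).measurable.comp
        (measurable_snd.prodMk (measurable_snd.comp measurable_fst)))
  · exact hN.comp ((measurable_fst.comp measurable_fst).prodMk measurable_snd)

theorem lintegral_enorm_fourierInv_integral_mul_rpow_le [SFinite μ] {ρ : α → ℝ} (hρ : Measurable ρ)
    (hρi : Integrable ρ μ) {N : α → V → ℂ} (hN : Measurable (Function.uncurry N))
    (hN1 : ∀ᵐ t ∂μ, ∀ η, ‖N t η‖ ≤ 1) (hW : Integrable W) {p : ℝ} (hp : 1 ≤ p) {K : ℝ≥0∞}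
    (hK : ∀ᵐ t ∂μ, ∫⁻ x, ‖𝓕⁻ (fun η ↦ N t η * W η) x‖ₑ ^ p ≤ K) :
    ∫⁻ x, ‖𝓕⁻ (fun η ↦ (∫ t, ρ t * N t η ∂μ) * W η) x‖ₑ ^ p ≤ (∫⁻ t, ‖ρ t‖ₑ ∂μ) ^ p * K := by
  obtain ⟨W', hW', hWW'⟩ := hW.aestronglyMeasurable
  have congr_W (g : V → ℂ) : 𝓕⁻ (fun η ↦ g η * W η) = 𝓕⁻ (fun η ↦ g η * W' η) :=
    funext (Real.fourierInv_congr_ae (hWW'.mono fun η h ↦ congrArg (g η * ·) h))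
  simp only [congr_W] at hK ⊢
  refine le_trans (lintegral_mono fun x ↦ ?_) (lintegral_rpow_lintegral_mul_le hρ.enorm
    (measurable_fourierInv_mul hN hW'.measurable).enorm hp hK)
  rw [fourierInv_integral_mul hρi hN hN1 (hW.congr hWW')]
  gcongr
  refine (enorm_integral_le_lintegral_enorm _).trans_eq ?_
  congr 1 with t
  rw [enorm_mul, ← ofReal_norm, Complex.norm_real, ofReal_norm]

theorem fourierInv_fourierChar_mul (W : V → ℂ) (w c x : V) :
    𝓕⁻ (fun η ↦ (𝐞 (-⟪w, η - c⟫) : ℂ) * W η) x = 𝐞 ⟪w, c⟫ * 𝓕⁻ W (x - w) := by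
  simp only [Real.fourierInv_eq, Circle.smul_def, smul_eq_mul]
  rw [← integral_const_mul]
  congr 1 with η
  rw [← mul_assoc, ← mul_assoc, ← Circle.coe_mul, ← Circle.coe_mul, ← AddChar.map_add_eq_mul,
    ← AddChar.map_add_eq_mul, inner_sub_right, inner_sub_right, real_inner_comm w η]
  congr 3
  ring

theorem integrable_rexp_neg_mul_sq_norm {b : ℝ} (hb : 0 < b) :
    Integrable fun y : V ↦ rexp (-b * ‖y‖ ^ 2) := by
  refine (GaussianFourier.integrable_cexp_neg_mul_sq_norm_add (V := V) (b := (b : ℂ))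
    (by simpa using hb) 0 0).norm.congr (Eventually.of_forall fun y ↦ ?_)
  simp [Complex.norm_exp, ← Complex.ofReal_pow]

theorem norm_rexp_neg_mul_sq_norm_le_one {F : Type*} [SeminormedAddCommGroup F] {b : ℝ}
    (hb : 0 ≤ b) (y : F) :
    ‖(rexp (-b * ‖y‖ ^ 2) : ℂ)‖ ≤ 1 := by
  rw [Complex.norm_real, norm_of_nonneg (by positivity), exp_le_one_iff]
  nlinarith [sq_nonneg ‖y‖]

theorem integral_gaussian_mul_fourierChar {b : ℝ} (hb : 0 < b) (η : V) :
    ∫ w : V, (((π / b) ^ (Module.finrank ℝ V / 2 : ℝ) * rexp (-(π ^ 2 / b) * ‖w‖ ^ 2) : ℝ) : ℂ) *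
      𝐞 (-⟪w, η⟫) = rexp (-b * ‖η‖ ^ 2) := by
  have fourier := fourier_gaussian_innerProductSpace (V := V) (b := ((π ^ 2 / b : ℝ) : ℂ))
    (by rw [ofReal_re]; positivity) η
  rw [Real.fourier_eq] at fourier
  have mass : (π / b) * (π / (π ^ 2 / b)) = 1 := by field_simp
  calc
    _ = ((π / b) ^ (Module.finrank ℝ V / 2 : ℝ) : ℝ) *
        ∫ w : V, 𝐞 (-⟪w, η⟫) • cexp (-((π ^ 2 / b : ℝ) : ℂ) * ‖w‖ ^ 2) := by
      rw [← integral_const_mul]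
      congr 1 with w
      simp only [Circle.smul_def, smul_eq_mul]
      push_cast
      ring
    _ = (((π / b) ^ (Module.finrank ℝ V / 2 : ℝ) *
        ((π / (π ^ 2 / b)) ^ (Module.finrank ℝ V / 2 : ℝ) * rexp (-b * ‖η‖ ^ 2)) : ℝ) : ℂ) := by
      rw [fourier]
      push_cast [ofReal_cpow (show 0 ≤ π / (π ^ 2 / b) by positivity)]
      congr 4
      field_simp
    _ = _ := by
      rw [← mul_assoc, ← mul_rpow (by positivity) (by positivity), mass, one_rpow, one_mul]

theorem lintegral_enorm_fourierInv_gaussian_mul_rpow_le {b : ℝ} (hb : 0 < b) (c : V)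
    (hW : Integrable W) {p : ℝ} (hp : 1 ≤ p) :
    ∫⁻ x, ‖𝓕⁻ (fun η ↦ (rexp (-b * ‖η - c‖ ^ 2) : ℂ) * W η) x‖ₑ ^ p ≤
      ∫⁻ x, ‖𝓕⁻ W x‖ₑ ^ p := by
  set ρ : V → ℝ := fun w ↦
    (π / b) ^ (Module.finrank ℝ V / 2 : ℝ) * rexp (-(π ^ 2 / b) * ‖w‖ ^ 2) with hρ
  have hρi : Integrable ρ := (integrable_rexp_neg_mul_sq_norm (by positivity)).const_mul _
  have hρ0 (w : V) : 0 ≤ ρ w := by positivity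
  have mass : ∫⁻ w, ‖ρ w‖ₑ = 1 := by
    rw [← ofReal_integral_norm_eq_lintegral_enorm hρi, ← ENNReal.ofReal_one]
    congr 1
    simp only [norm_of_nonneg (hρ0 _)]
    rw [integral_const_mul, GaussianFourier.integral_rexp_neg_mul_sq_norm (by positivity),
      ← mul_rpow (by positivity) (by positivity),
      show π / b * (π / (π ^ 2 / b)) = 1 by field_simp, one_rpow]
  have unit (z : Circle) : ‖(z : ℂ)‖ₑ = 1 := by
    rw [← ofReal_norm, Circle.norm_coe, ENNReal.ofReal_one]
  have translate (w : V) :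
      ∫⁻ x, ‖𝓕⁻ (fun η ↦ (𝐞 (-⟪w, η - c⟫) : ℂ) * W η) x‖ₑ ^ p = ∫⁻ x, ‖𝓕⁻ W x‖ₑ ^ p := by
    simp only [fourierInv_fourierChar_mul, enorm_mul, unit, one_mul]
    exact lintegral_sub_right_eq_self (fun x ↦ ‖𝓕⁻ W x‖ₑ ^ p) w
  have superposition := lintegral_enorm_fourierInv_integral_mul_rpow_le
    (N := fun w η ↦ (𝐞 (-⟪w, η - c⟫) : ℂ)) (by fun_prop) hρi
    ((continuous_subtype_val.comp continuous_fourierChar).measurable.comp (by fun_prop))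
    (Eventually.of_forall fun w η ↦ (Circle.norm_coe _).le) hW hp
    (Eventually.of_forall fun w ↦ (translate w).le)
  rw [mass, ENNReal.one_rpow, one_mul] at superposition
  simpa only [hρ, integral_gaussian_mul_fourierChar hb] using superposition

end Multipliers

section Subordination

/-- The density on `(0, ∞)` against which the product of the Bessel multiplier
`(1 + b‖η‖²)⁻ˢ` and a Gaussian `exp(-ba‖η - c‖²)` is a superposition of the Gaussians
`exp(-b(t + a)‖η - (a / (t + a)) • c‖²)`, where `r = b‖c‖²`. The exponent comes from
completing the square in `t‖η‖² + a‖η - c‖²`. -/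
def subordinationDensity (s a r t : ℝ) : ℝ :=
  (Real.Gamma s)⁻¹ * (t ^ (s - 1) * rexp (-(t + t * a / (t + a) * r)))

variable {s a r : ℝ}

theorem measurable_subordinationDensity : Measurable (subordinationDensity s a r) := by
  unfold subordinationDensity
  fun_prop

theorem subordinationDensity_nonneg (hs : 0 < s) {t : ℝ} (ht : 0 < t) :
    0 ≤ subordinationDensity s a r t := by
  have := Gamma_pos_of_pos hs
  unfold subordinationDensity
  positivity

theorem integrableOn_rpow_mul_exp_neg_mul (hs : 0 < s) (hr : 0 < r) :
    IntegrableOn (fun t ↦ t ^ (s - 1) * rexp (-(r * t))) (Ioi 0) := by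
  simpa only [rpow_one, neg_mul] using
    integrableOn_rpow_mul_exp_neg_mul_rpow (p := 1) (by linarith : -1 < s - 1) one_pos hr

theorem exp_neg_add_mul_div_le (ha : 0 < a) (hr : 0 ≤ r) {t : ℝ} (ht : 0 < t) :
    rexp (-(t + t * a / (t + a) * r)) ≤
      rexp (-((1 + r) / 2 * t)) + rexp (-(a / 2 * (1 + r))) * rexp (-(1 / 2 * t)) := by
  rcases le_total t a with hta | hat
  · have : t / 2 * r ≤ t * a / (t + a) * r := by
      refine mul_le_mul_of_nonneg_right ?_ hr
      rw [div_le_div_iff₀ two_pos (by positivity)]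
      nlinarith
    refine le_add_of_le_of_nonneg (exp_le_exp.2 ?_) (by positivity)
    linarith
  · have : a / 2 * r ≤ t * a / (t + a) * r := by
      refine mul_le_mul_of_nonneg_right ?_ hr
      rw [div_le_div_iff₀ two_pos (by positivity)]
      nlinarith
    rw [← Real.exp_add]
    refine le_add_of_nonneg_of_le (by positivity) (exp_le_exp.2 ?_)
    linarith

theorem exp_neg_mul_le_rpow_neg (hs : 0 < s) (ha : 0 < a) (hr : 0 < r) :
    rexp (-(a * r)) ≤ (s / a) ^ s * r ^ (-s) := by
  calc
    _ = rexp (-(a * r / s)) ^ s := by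
      rw [← Real.exp_mul, neg_mul, div_mul_cancel₀ _ hs.ne']
    _ ≤ ((a * r / s)⁻¹) ^ s := by
      rw [Real.exp_neg]
      gcongr
      linarith [add_one_le_exp (a * r / s)]
    _ = (s / a * r⁻¹) ^ s := by
      congr 1
      field_simp
    _ = _ := by rw [mul_rpow (by positivity) (by positivity), inv_rpow hr.le, rpow_neg hr.le]

theorem subordinationDensity_le (hs : 0 < s) (ha : 0 < a) (hr : 0 ≤ r) {t : ℝ} (ht : 0 < t) :
    subordinationDensity s a r t ≤
      (Real.Gamma s)⁻¹ * (t ^ (s - 1) * rexp (-((1 + r) / 2 * t)) +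
        rexp (-(a / 2 * (1 + r))) * (t ^ (s - 1) * rexp (-(1 / 2 * t)))) := by
  have := Gamma_pos_of_pos hs
  calc
    _ ≤ (Real.Gamma s)⁻¹ * (t ^ (s - 1) * (rexp (-((1 + r) / 2 * t)) +
        rexp (-(a / 2 * (1 + r))) * rexp (-(1 / 2 * t)))) := by
      unfold subordinationDensity
      gcongr
      exact exp_neg_add_mul_div_le ha hr ht
    _ = _ := by ring

theorem integrableOn_subordinationDensity_and_integral_le (hs : 0 < s) (ha : 0 < a) (hr : 0 ≤ r) :
    IntegrableOn (subordinationDensity s a r) (Ioi 0) ∧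
      ∫ t in Ioi 0, subordinationDensity s a r t ≤
        2 ^ s * (1 + (s / (a / 2)) ^ s) * (1 + r) ^ (-s) := by
  have := Gamma_pos_of_pos hs
  have left := integrableOn_rpow_mul_exp_neg_mul hs (show 0 < (1 + r) / 2 by positivity)
  have right := (integrableOn_rpow_mul_exp_neg_mul hs (one_half_pos (α := ℝ))).const_mul
    (rexp (-(a / 2 * (1 + r))))
  have majorant := (left.add right).const_mul (Real.Gamma s)⁻¹
  have integrable : IntegrableOn (subordinationDensity s a r) (Ioi 0) := by
    refine Integrable.mono' majorant measurable_subordinationDensity.aestronglyMeasurable ?_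
    filter_upwards [ae_restrict_mem measurableSet_Ioi] with t ht
    exact (norm_of_nonneg (subordinationDensity_nonneg hs ht)).trans_le
      (subordinationDensity_le hs ha hr ht)
  refine ⟨integrable, ?_⟩
  calc
    _ ≤ (1 / ((1 + r) / 2)) ^ s + rexp (-(a / 2 * (1 + r))) * (1 / (1 / 2)) ^ s := by
      refine (setIntegral_mono_on integrable majorant measurableSet_Ioi
        fun t ht ↦ subordinationDensity_le hs ha hr ht).trans_eq ?_
      rw [integral_const_mul, integral_add' left right, integral_const_mul,
        integral_rpow_mul_exp_neg_mul_Ioi hs (by positivity),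
        integral_rpow_mul_exp_neg_mul_Ioi hs (by positivity)]
      field_simp
    _ ≤ (1 / ((1 + r) / 2)) ^ s + ((s / (a / 2)) ^ s * (1 + r) ^ (-s)) * (1 / (1 / 2)) ^ s := by
      gcongr
      exact exp_neg_mul_le_rpow_neg hs (by positivity) (by positivity)
    _ = _ := by
      rw [one_div_div, one_div_one_div, div_rpow two_pos.le (by positivity),
        rpow_neg (by positivity)]
      ring

theorem lintegral_enorm_subordinationDensity_le (hs : 0 < s) (ha : 0 < a) (hr : 0 ≤ r) :
    ∫⁻ t in Ioi 0, ‖subordinationDensity s a r t‖ₑ ≤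
      ENNReal.ofReal (2 ^ s * (1 + (s / (a / 2)) ^ s) * (1 + r) ^ (-s)) := by
  obtain ⟨integrable, le⟩ := integrableOn_subordinationDensity_and_integral_le hs ha hr
  rw [← ofReal_integral_norm_eq_lintegral_enorm integrable, setIntegral_congr_fun measurableSet_Ioi
    fun t ht ↦ norm_of_nonneg (subordinationDensity_nonneg hs ht)]
  exact ENNReal.ofReal_le_ofReal le

variable {V : Type*} [NormedAddCommGroup V] [InnerProductSpace ℝ V]

theorem mul_sq_norm_add_mul_sq_norm_sub {t : ℝ} (hta : t + a ≠ 0) (η c : V) :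
    t * ‖η‖ ^ 2 + a * ‖η - c‖ ^ 2 =
      (t + a) * ‖η - (a / (t + a)) • c‖ ^ 2 + t * a / (t + a) * ‖c‖ ^ 2 := by
  rw [norm_sub_sq_real, norm_sub_sq_real, real_inner_smul_right, norm_smul, mul_pow,
    Real.norm_eq_abs, sq_abs]
  field_simp
  ring

theorem integral_subordinationDensity_mul_gaussian (hs : 0 < s) (ha : 0 < a) {b : ℝ} (hb : 0 < b)
    (η c : V) :
    ∫ t in Ioi 0, subordinationDensity s a (b * ‖c‖ ^ 2) t *
        rexp (-(b * (t + a)) * ‖η - (a / (t + a)) • c‖ ^ 2) =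
      (1 + b * ‖η‖ ^ 2) ^ (-s) * rexp (-(b * a) * ‖η - c‖ ^ 2) := by
  have := Gamma_pos_of_pos hs
  calc
    _ = ∫ t in Ioi 0, (Real.Gamma s)⁻¹ * rexp (-(b * a) * ‖η - c‖ ^ 2) *
        (t ^ (s - 1) * rexp (-((1 + b * ‖η‖ ^ 2) * t))) := by
      refine setIntegral_congr_fun measurableSet_Ioi fun t (ht : 0 < t) ↦ ?_
      have square := mul_sq_norm_add_mul_sq_norm_sub (by positivity : t + a ≠ 0) η c
      have exponent : -(t + t * a / (t + a) * (b * ‖c‖ ^ 2)) +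
          -(b * (t + a)) * ‖η - (a / (t + a)) • c‖ ^ 2 =
          -(b * a) * ‖η - c‖ ^ 2 + -((1 + b * ‖η‖ ^ 2) * t) := by
        linear_combination b * square
      simp only [subordinationDensity]
      rw [mul_assoc, mul_assoc, ← Real.exp_add, exponent, Real.exp_add]
      ring
    _ = _ := by
      rw [integral_const_mul, integral_rpow_mul_exp_neg_mul_Ioi hs (by positivity), one_div,
        inv_rpow (by positivity), rpow_neg (by positivity)]
      field_simp

variable [FiniteDimensional ℝ V] [MeasurableSpace V] [BorelSpace V] {W : V → ℂ}

theorem lintegral_enorm_fourierInv_bessel_mul_gaussian_mul_rpow_le (hs : 0 < s) (ha : 0 < a)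
    {b : ℝ} (hb : 0 < b) {p : ℝ} (hp : 1 ≤ p) (hW : Integrable W) (c : V) :
    ∫⁻ x, ‖𝓕⁻ (fun η ↦ (((1 + b * ‖η‖ ^ 2) ^ (-s) * rexp (-(b * a) * ‖η - c‖ ^ 2) : ℝ) : ℂ) *
        W η) x‖ₑ ^ p ≤
      ENNReal.ofReal (2 ^ s * (1 + (s / (a / 2)) ^ s) * (1 + b * ‖c‖ ^ 2) ^ (-s)) ^ p *
        ∫⁻ x, ‖𝓕⁻ W x‖ₑ ^ p := by
  have hr : 0 ≤ b * ‖c‖ ^ 2 := by positivity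
  have hpos : ∀ᵐ t ∂volume.restrict (Ioi (0 : ℝ)), 0 < b * (t + a) := by
    filter_upwards [ae_restrict_mem measurableSet_Ioi] with t (ht : 0 < t)
    positivity
  have superposition := lintegral_enorm_fourierInv_integral_mul_rpow_le
    (N := fun t η ↦ (rexp (-(b * (t + a)) * ‖η - (a / (t + a)) • c‖ ^ 2) : ℂ))
    measurable_subordinationDensity
    (integrableOn_subordinationDensity_and_integral_le hs ha hr).1 (by fun_prop)
    (hpos.mono fun t ht η ↦ norm_rexp_neg_mul_sq_norm_le_one ht.le _) hW hp
    (hpos.mono fun t ht ↦ lintegral_enorm_fourierInv_gaussian_mul_rpow_le ht _ hW hp)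
  simp only [← Complex.ofReal_mul, integral_complex_ofReal,
    integral_subordinationDensity_mul_gaussian hs ha hb] at superposition
  refine superposition.trans ?_
  gcongr
  exact lintegral_enorm_subordinationDensity_le hs ha hr

theorem exists_lintegral_enorm_fourierInv_bessel_mul_gaussian_mul_rpow_le (hs : 0 ≤ s)
    (ha : 0 < a) {b : ℝ} (hb : 0 < b) {p : ℝ} (hp : 1 ≤ p) :
    ∃ C : ℝ≥0, ∀ {W : V → ℂ}, Integrable W → ∀ c,
      ∫⁻ x, ‖𝓕⁻ (fun η ↦ (((1 + b * ‖η‖ ^ 2) ^ (-s) * rexp (-(b * a) * ‖η - c‖ ^ 2) : ℝ) : ℂ) *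
          W η) x‖ₑ ^ p ≤
        C * (ENNReal.ofReal ((1 + b * ‖c‖ ^ 2) ^ (-(s * p))) * ∫⁻ x, ‖𝓕⁻ W x‖ₑ ^ p) := by
  obtain rfl | hs := hs.eq_or_lt
  · refine ⟨1, fun hW c ↦ ?_⟩
    simpa using lintegral_enorm_fourierInv_gaussian_mul_rpow_le (mul_pos hb ha) c hW hp
  · refine ⟨(2 ^ s * (1 + (s / (a / 2)) ^ s)).toNNReal ^ p, fun hW c ↦
      (lintegral_enorm_fourierInv_bessel_mul_gaussian_mul_rpow_le hs ha hb hp hW c).trans_eq ?_⟩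
    rw [← mul_assoc, ENNReal.ofReal_mul (by positivity),
      ENNReal.mul_rpow_of_nonneg _ _ (by positivity),
      ENNReal.ofReal_rpow_of_pos (show 0 < (1 + b * ‖c‖ ^ 2) ^ (-s) by positivity),
      ← rpow_mul (by positivity), neg_mul, ENNReal.coe_rpow_of_nonneg _ (by positivity)]
    rfl

end Subordination

section GaussianSTFT

variable {V : Type*} [NormedAddCommGroup V] [InnerProductSpace ℝ V] [FiniteDimensional ℝ V]
  [MeasurableSpace V] [BorelSpace V] {W u : V → ℂ} {a b p : ℝ}

/-- The short-time Fourier transform of `u` at the point `x` and frequency `ν`, with window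
`exp(-a‖·‖²)` and with the normalisation `exp(-2πi⟪y, ν⟫)` of the Fourier kernel, in which
Fourier inversion carries no constants. -/
def gaussianSTFT (a : ℝ) (u : V → ℂ) (x ν : V) : ℂ :=
  𝓕 (fun y ↦ (rexp (-a * ‖y - x‖ ^ 2) : ℂ) * u y) ν

theorem fourierInv_gaussian_mul (hb : 0 < b) (hW : Integrable W) (c x : V) :
    𝓕⁻ (fun η ↦ (rexp (-b * ‖η - c‖ ^ 2) : ℂ) * W η) x =
      ((π / b) ^ (Module.finrank ℝ V / 2 : ℝ) : ℝ) *
        (𝐞 ⟪x, c⟫ * gaussianSTFT (π ^ 2 / b) (𝓕⁻ W) x c) := by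
  have superposition := fourierInv_integral_mul
    (N := fun w η ↦ (𝐞 (-⟪w, η - c⟫) : ℂ))
    ((integrable_rexp_neg_mul_sq_norm (V := V) (by positivity : 0 < π ^ 2 / b)).const_mul
      ((π / b) ^ (Module.finrank ℝ V / 2 : ℝ)))
    ((continuous_subtype_val.comp continuous_fourierChar).measurable.comp (by fun_prop))
    (Eventually.of_forall fun w η ↦ (Circle.norm_coe _).le) hW x
  simp only [integral_gaussian_mul_fourierChar hb, fourierInv_fourierChar_mul] at superposition
  rw [superposition, ← integral_sub_left_eq_self _ volume x, gaussianSTFT, Real.fourier_eq,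
    ← integral_const_mul, ← integral_const_mul]
  congr 1 with y
  simp only [sub_sub_cancel, Circle.smul_def, smul_eq_mul, inner_sub_left, sub_eq_add_neg ⟪x, c⟫,
    AddChar.map_add_eq_mul, Circle.coe_mul, norm_sub_rev x y, ofReal_mul]
  ring

theorem lintegral_enorm_fourierInv_gaussian_mul_rpow (hb : 0 < b) (hp : 0 ≤ p) (hW : Integrable W)
    (ν : V) :
    ∫⁻ x, ‖𝓕⁻ (fun η ↦ (rexp (-b * ‖η - ν‖ ^ 2) : ℂ) * W η) x‖ₑ ^ p =
      (((π / b) ^ (Module.finrank ℝ V / 2 : ℝ)).toNNReal ^ p : ℝ≥0) *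
        ∫⁻ x, ‖gaussianSTFT (π ^ 2 / b) (𝓕⁻ W) x ν‖ₑ ^ p := by
  rw [← lintegral_const_mul' _ _ ENNReal.coe_ne_top]
  congr 1 with x
  rw [fourierInv_gaussian_mul hb hW, enorm_mul, enorm_mul, ← ofReal_norm (_ : ℂ),
    ← ofReal_norm (𝐞 _ : ℂ), Complex.norm_real, Circle.norm_coe, ENNReal.ofReal_one, one_mul,
    norm_of_nonneg (by positivity), ENNReal.mul_rpow_of_nonneg _ _ hp,
    ENNReal.coe_rpow_of_nonneg _ hp]
  rfl

theorem lintegral_enorm_gaussianSTFT_fourierInv_rpow (ha : 0 < a) (hp : 0 ≤ p) (hW : Integrable W)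
    (ν : V) :
    ∫⁻ x, ‖gaussianSTFT a (𝓕⁻ W) x ν‖ₑ ^ p =
      (((π / a) ^ (Module.finrank ℝ V / 2 : ℝ)).toNNReal ^ p : ℝ≥0) *
        ∫⁻ x, ‖𝓕⁻ (fun η ↦ (rexp (-(π ^ 2 / a) * ‖η - ν‖ ^ 2) : ℂ) * W η) x‖ₑ ^ p := by
  rw [lintegral_enorm_fourierInv_gaussian_mul_rpow (by positivity) hp hW,
    div_div_cancel₀ (by positivity), ← mul_assoc, ← ENNReal.coe_mul, ← NNReal.mul_rpow,
    ← toNNReal_mul (by positivity), ← mul_rpow (by positivity) (by positivity),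
    show π / a * (π / (π ^ 2 / a)) = 1 by field_simp, one_rpow, toNNReal_one, NNReal.one_rpow,
    ENNReal.coe_one, one_mul]

theorem integrable_one_add_mul_sq_norm_rpow_neg_mul {s : ℝ} (hs : 0 ≤ s) (hb : 0 ≤ b)
    (hW : Integrable W) : Integrable fun η ↦ (((1 + b * ‖η‖ ^ 2) ^ (-s) : ℝ) : ℂ) * W η := by
  refine hW.bdd_mul (c := 1) (Measurable.aestronglyMeasurable (by fun_prop))
    (Eventually.of_forall fun η ↦ ?_)
  rw [Complex.norm_real, norm_of_nonneg (by positivity)]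
  exact rpow_le_one_of_one_le_of_nonpos (le_add_of_nonneg_right (by positivity)) (neg_nonpos.2 hs)

theorem exists_lintegral_gaussianSTFT_bessel_rpow_le {s : ℝ} (hs : 0 ≤ s) (ha : 0 < a)
    (hb : 0 < b) (hp : 1 ≤ p) :
    ∃ C : ℝ≥0, ∀ {H : V → ℂ}, Integrable H → ∀ ν,
      ∫⁻ x, ‖gaussianSTFT a
          (𝓕⁻ fun η ↦ (((1 + b * ‖η‖ ^ 2) ^ (-s) : ℝ) : ℂ) * H η) x ν‖ₑ ^ p ≤
        C * ∫⁻ x, ENNReal.ofReal ((1 + b * ‖ν‖ ^ 2) ^ (-(s * p))) *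
          ‖gaussianSTFT (2 * a) (𝓕⁻ H) x ν‖ₑ ^ p := by
  set c := π ^ 2 / (2 * a) with hc_def
  have hc : 0 < c := by positivity
  have hp0 : 0 ≤ p := by linarith
  obtain ⟨C, hC⟩ := exists_lintegral_enorm_fourierInv_bessel_mul_gaussian_mul_rpow_le (V := V)
    hs (by positivity : 0 < c / b) hb hp
  rw [mul_div_cancel₀ _ hb.ne'] at hC
  refine ⟨((π / a) ^ (Module.finrank ℝ V / 2 : ℝ)).toNNReal ^ p *
    (C * ((π / c) ^ (Module.finrank ℝ V / 2 : ℝ)).toNNReal ^ p), fun {H} hH ν ↦ ?_⟩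
  have split (η : V) : (rexp (-(π ^ 2 / a) * ‖η - ν‖ ^ 2) : ℂ) *
      ((((1 + b * ‖η‖ ^ 2) ^ (-s) : ℝ) : ℂ) * H η) =
      (((1 + b * ‖η‖ ^ 2) ^ (-s) * rexp (-c * ‖η - ν‖ ^ 2) : ℝ) : ℂ) *
        ((rexp (-c * ‖η - ν‖ ^ 2) : ℂ) * H η) := by
    rw [show -(π ^ 2 / a) * ‖η - ν‖ ^ 2 = -c * ‖η - ν‖ ^ 2 + -c * ‖η - ν‖ ^ 2 by
      rw [hc_def]; field_simp; ring, Real.exp_add]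
    push_cast
    ring
  rw [lintegral_enorm_gaussianSTFT_fourierInv_rpow ha hp0
    (integrable_one_add_mul_sq_norm_rpow_neg_mul hs hb.le hH)]
  simp only [split]
  rw [lintegral_const_mul' _ _ ENNReal.ofReal_ne_top, ENNReal.coe_mul, mul_assoc]
  gcongr
  refine (hC (hH.bdd_mul (Measurable.aestronglyMeasurable (by fun_prop)) (Eventually.of_forall
    fun η ↦ norm_rexp_neg_mul_sq_norm_le_one hc.le (η - ν))) ν).trans_eq ?_
  rw [lintegral_enorm_fourierInv_gaussian_mul_rpow hc hp0 hH, div_div_cancel₀ (by positivity),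
    ENNReal.coe_mul]
  ring

theorem measurable_gaussianSTFT (hu : Measurable u) :
    Measurable fun z : V × V ↦ gaussianSTFT a u z.1 z.2 := by
  simp only [gaussianSTFT, Real.fourier_eq, Circle.smul_def, smul_eq_mul]
  refine (StronglyMeasurable.integral_prod_right' (f := fun q : (V × V) × V ↦
    (𝐞 (-⟪q.2, q.1.2⟫) : ℂ) * ((rexp (-a * ‖q.2 - q.1.1‖ ^ 2) : ℂ) * u q.2))
    (Measurable.stronglyMeasurable ?_)).measurable
  refine Measurable.mul ?_ (by fun_prop)
  exact (continuous_subtype_val.comp continuous_fourierChar).measurable.comp (by fun_prop)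

theorem lintegral_lintegral_gaussian_mul_rpow (ha : 0 < a) (hp : 0 < p) (hu : Measurable u) :
    ∫⁻ x, ∫⁻ y, ‖(rexp (-a * ‖y - x‖ ^ 2) : ℂ) * u y‖ₑ ^ p =
      ENNReal.ofReal ((π / (a * p)) ^ (Module.finrank ℝ V / 2 : ℝ)) * ∫⁻ y, ‖u y‖ₑ ^ p := by
  have hap : 0 < a * p := by positivity
  have expand (x y : V) : ‖(rexp (-a * ‖y - x‖ ^ 2) : ℂ) * u y‖ₑ ^ p =
      ENNReal.ofReal (rexp (-(a * p) * ‖y - x‖ ^ 2)) * ‖u y‖ₑ ^ p := by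
    rw [enorm_mul, ENNReal.mul_rpow_of_nonneg _ _ hp.le, ← ofReal_norm (rexp _ : ℂ),
      Complex.norm_real, norm_of_nonneg (by positivity),
      ENNReal.ofReal_rpow_of_nonneg (by positivity) hp.le, ← Real.exp_mul]
    ring_nf
  simp only [expand]
  rw [lintegral_lintegral_swap (Measurable.aemeasurable (by fun_prop)),
    ← GaussianFourier.integral_rexp_neg_mul_sq_norm hap, ofReal_integral_eq_lintegral_ofReal
    (integrable_rexp_neg_mul_sq_norm hap) (Eventually.of_forall fun _ ↦ by positivity),
    ← lintegral_const_mul _ (by fun_prop)]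
  congr 1 with y
  rw [lintegral_mul_const _ (by fun_prop)]
  congr 1
  exact lintegral_sub_left_eq_self (fun x : V ↦ ENNReal.ofReal (rexp (-(a * p) * ‖x‖ ^ 2))) y

theorem memLp_two_rexp_neg_mul_sq_norm (ha : 0 < a) :
    MemLp (fun y : V ↦ (rexp (-a * ‖y‖ ^ 2) : ℂ)) 2 := by
  refine (memLp_two_iff_integrable_sq_norm (Measurable.aestronglyMeasurable (by fun_prop))).2
    ((integrable_rexp_neg_mul_sq_norm (by positivity : 0 < 2 * a)).congr
      (Eventually.of_forall fun y ↦ ?_))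
  simp only [Complex.norm_real, norm_of_nonneg (exp_nonneg _), ← Real.exp_nat_mul]
  congr 1
  push_cast
  ring

theorem exists_lintegral_mul_gaussianSTFT_rpow_le [Nontrivial V] (ha : 0 < a) (hb : 0 < b)
    (hp1 : 1 < p) (hp2 : p ≤ 2) :
    ∃ C : ℝ≥0, ∀ {u : V → ℂ}, Measurable u → MemLp u ∞ →
      ∫⁻ x, ∫⁻ ν, ENNReal.ofReal
          ((1 + b * ‖ν‖ ^ 2) ^ (-(Module.finrank ℝ V * (1 / p - 1 / 2) * p))) *
          ‖gaussianSTFT a u x ν‖ₑ ^ p ≤ C * ∫⁻ y, ‖u y‖ₑ ^ p := by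
  have hp0 : 0 < p := by linarith
  obtain ⟨c, hc⟩ := exists_volume_lt_japanese_le (V := V) hb
  obtain ⟨C, hC⟩ := paley_inequality (by fun_prop) (fun ξ ↦ by positivity) hc hp1 hp2
  have weight (ν : V) : (1 + b * ‖ν‖ ^ 2) ^ (-(Module.finrank ℝ V * (1 / p - 1 / 2) * p)) =
      ((1 + b * ‖ν‖ ^ 2) ^ (-(Module.finrank ℝ V : ℝ) / 2)) ^ (2 - p) := by
    rw [← rpow_mul (by positivity)]
    congr 1
    field_simp
  refine ⟨C * ((π / (a * p)) ^ (Module.finrank ℝ V / 2 : ℝ)).toNNReal, fun {u} hu hu' ↦ ?_⟩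
  rw [ENNReal.coe_mul, mul_assoc (C : ℝ≥0∞), ← ENNReal.ofReal,
    ← lintegral_lintegral_gaussian_mul_rpow ha hp0 hu,
    ← lintegral_const_mul' _ _ ENNReal.coe_ne_top]
  refine lintegral_mono fun x ↦ ?_
  simp only [weight]
  have h₁ : MemLp (fun y ↦ (rexp (-a * ‖y - x‖ ^ 2) : ℂ)) 1 :=
    memLp_one_iff_integrable.2 ((integrable_rexp_neg_mul_sq_norm ha).comp_sub_right x).ofReal
  have h₂ : MemLp (fun y ↦ (rexp (-a * ‖y - x‖ ^ 2) : ℂ)) 2 :=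
    (memLp_two_rexp_neg_mul_sq_norm ha).comp_measurePreserving
      (measurePreserving_sub_right volume x)
  exact hC _ (memLp_one_iff_integrable.1 (hu'.mul h₁)) (hu'.mul h₂)

theorem continuous_fourierInv (hW : Integrable W) : Continuous (𝓕⁻ W) := by
  have := (continuous_fourier hW).comp continuous_neg
  exact this.congr fun x ↦ (Real.fourierInv_eq_fourier_neg W x).symm

theorem memLp_top_fourierInv (hW : Integrable W) : MemLp (𝓕⁻ W) ∞ := by
  refine memLp_top_of_bound (continuous_fourierInv hW).aestronglyMeasurable (∫ η, ‖W η‖)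
    (Eventually.of_forall fun x ↦ ?_)
  rw [Real.fourierInv_eq_fourier_neg]
  exact VectorFourier.norm_fourierIntegral_le_integral_norm _ _ _ _ _

theorem exists_lintegral_gaussianSTFT_rpow_le [Nontrivial V] (ha : 0 < a) (hb : 0 < b)
    (hp1 : 1 < p) (hp2 : p ≤ 2) :
    ∃ C : ℝ≥0, ∀ {H : V → ℂ}, Integrable H →
      ∫⁻ x, ∫⁻ ν, ‖gaussianSTFT a (𝓕⁻ fun η ↦
          (((1 + b * ‖η‖ ^ 2) ^ (-(Module.finrank ℝ V * (1 / p - 1 / 2))) : ℝ) : ℂ) * H η) x ν‖ₑ ^ p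
        ≤ C * ∫⁻ x, ‖𝓕⁻ H x‖ₑ ^ p := by
  set s : ℝ := Module.finrank ℝ V * (1 / p - 1 / 2)
  have hs : 0 ≤ s := mul_nonneg (Nat.cast_nonneg _)
    (sub_nonneg.2 (one_div_le_one_div_of_le (by linarith) hp2))
  obtain ⟨C₁, h₁⟩ := exists_lintegral_gaussianSTFT_bessel_rpow_le (V := V) hs ha hb hp1.le
  obtain ⟨C₂, h₂⟩ := exists_lintegral_mul_gaussianSTFT_rpow_le (V := V)
    (by positivity : 0 < 2 * a) hb hp1 hp2
  refine ⟨C₁ * C₂, fun {H} hH ↦ ?_⟩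
  have measurable {a : ℝ} {W : V → ℂ} (hW : Integrable W) :
      Measurable fun z : V × V ↦ ‖gaussianSTFT a (𝓕⁻ W) z.1 z.2‖ₑ ^ p :=
    (measurable_gaussianSTFT (continuous_fourierInv hW).measurable).enorm.pow_const p
  calc
    _ = ∫⁻ ν, ∫⁻ x, ‖gaussianSTFT a
        (𝓕⁻ fun η ↦ (((1 + b * ‖η‖ ^ 2) ^ (-s) : ℝ) : ℂ) * H η) x ν‖ₑ ^ p :=
      lintegral_lintegral_swap
        (measurable (integrable_one_add_mul_sq_norm_rpow_neg_mul hs hb.le hH)).aemeasurable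
    _ ≤ ∫⁻ ν, C₁ * ∫⁻ x, ENNReal.ofReal ((1 + b * ‖ν‖ ^ 2) ^ (-(s * p))) *
        ‖gaussianSTFT (2 * a) (𝓕⁻ H) x ν‖ₑ ^ p := lintegral_mono (h₁ hH)
    _ = C₁ * ∫⁻ x, ∫⁻ ν, ENNReal.ofReal ((1 + b * ‖ν‖ ^ 2) ^ (-(s * p))) *
        ‖gaussianSTFT (2 * a) (𝓕⁻ H) x ν‖ₑ ^ p := by
      rw [lintegral_const_mul' _ _ ENNReal.coe_ne_top, lintegral_lintegral_swap]
      exact (Measurable.mul (by fun_prop) ((measurable hH).comp measurable_swap)).aemeasurable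
    _ ≤ C₁ * (C₂ * ∫⁻ x, ‖𝓕⁻ H x‖ₑ ^ p) := by
      gcongr
      exact h₂ (continuous_fourierInv hH).measurable (memLp_top_fourierInv hH)
    _ = _ := by rw [ENNReal.coe_mul, mul_assoc]

end GaussianSTFT

section Normalisation

variable {d : ℕ} {k p : ℝ}

theorem FT_eq_fourier (u : E d → ℂ) (ξ : E d) : FT d u ξ = 𝓕 u ((2 * π)⁻¹ • ξ) := by
  rw [Real.fourier_eq', FT]
  congr 1 with x
  rw [smul_eq_mul, real_inner_smul_right]
  congr 2
  push_cast
  field_simp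

theorem stft_eq_gaussianSTFT (u : E d → ℂ) (z : P d) :
    stft d u z = gaussianSTFT (1 / 2) u z.1 ((2 * π)⁻¹ • z.2) := by
  rw [gaussianSTFT, ← FT_eq_fourier, FT, stft]
  congr 1 with y
  rw [pkbar, show -‖y - z.1‖ ^ 2 / 2 = -(1 / 2) * ‖y - z.1‖ ^ 2 by ring]
  ring

theorem bessel_eq_fourierInv (u : E d → ℂ) :
    bessel d k u =
      𝓕⁻ fun η ↦ (((1 + (2 * π) ^ 2 * ‖η‖ ^ 2) ^ (k / 2) : ℝ) : ℂ) * 𝓕 u η := by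
  ext x
  have change_of_variables := Measure.integral_comp_inv_smul_of_nonneg volume
    (fun η : E d ↦ cexp (2 * π * ⟪η, x⟫ * I) *
      ((((1 + (2 * π) ^ 2 * ‖η‖ ^ 2) ^ (k / 2) : ℝ) : ℂ) * 𝓕 u η)) two_pi_pos.le
  rw [finrank_euclideanSpace_fin] at change_of_variables
  rw [bessel, Real.fourierInv_eq', ← ofReal_inv, ← Complex.real_smul,
    inv_smul_eq_iff₀ (by positivity)]
  simp only [smul_eq_mul]
  push_cast at change_of_variables ⊢
  rw [← change_of_variables]
  congr 1 with ξ
  have norm_dilate : (2 * π) ^ 2 * ‖(2 * π)⁻¹ • ξ‖ ^ 2 = ‖ξ‖ ^ 2 := by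
    rw [norm_smul, ← mul_pow, norm_of_nonneg (by positivity), mul_inv_cancel_left₀ (by positivity)]
  rw [FT_eq_fourier, norm_dilate, real_inner_smul_left, real_inner_comm, mul_assoc]
  congr 2
  push_cast
  field_simp

theorem hasTemperateGrowth_one_add_sq_mul_sq_norm_rpow {V : Type*} [NormedAddCommGroup V]
    [InnerProductSpace ℝ V] (c r : ℝ) :
    Function.HasTemperateGrowth fun η : V ↦ (1 + c ^ 2 * ‖η‖ ^ 2) ^ r := by
  have := (Function.hasTemperateGrowth_one_add_norm_sq_rpow V r).comp
    (by fun_prop : (fun η : V ↦ c • η).HasTemperateGrowth)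
  simpa only [Function.comp_def, norm_smul, mul_pow, Real.norm_eq_abs, sq_abs] using this

/-- The Fourier transform, in Mathlib's normalisation, of the Bessel potential `(1-Δ)^{k/2} f`,
as a Schwartz function. -/
def besselFourier (k : ℝ) (f : SchwartzMap (E d) ℂ) : SchwartzMap (E d) ℂ :=
  SchwartzMap.smulLeftCLM ℂ (fun η ↦ (1 + (2 * π) ^ 2 * ‖η‖ ^ 2) ^ (k / 2)) (𝓕 f)

theorem besselFourier_apply (f : SchwartzMap (E d) ℂ) (η : E d) :
    besselFourier k f η =
      (((1 + (2 * π) ^ 2 * ‖η‖ ^ 2) ^ (k / 2) : ℝ) : ℂ) * 𝓕 (f : E d → ℂ) η := by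
  rw [besselFourier, SchwartzMap.smulLeftCLM_apply_apply
    (hasTemperateGrowth_one_add_sq_mul_sq_norm_rpow _ _), SchwartzMap.fourier_coe, real_smul]

theorem coe_fourierInv_besselFourier (f : SchwartzMap (E d) ℂ) :
    ((𝓕⁻ (besselFourier k f) : SchwartzMap (E d) ℂ) : E d → ℂ) = bessel d k f := by
  rw [SchwartzMap.fourierInv_coe, bessel_eq_fourierInv]
  congr 1 with η
  exact besselFourier_apply f η

theorem eq_fourierInv_mul_besselFourier (f : SchwartzMap (E d) ℂ) :
    ⇑f = 𝓕⁻ fun η ↦ (((1 + (2 * π) ^ 2 * ‖η‖ ^ 2) ^ (-(k / 2)) : ℝ) : ℂ) * besselFourier k f η := by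
  have cancel (η : E d) : (((1 + (2 * π) ^ 2 * ‖η‖ ^ 2) ^ (-(k / 2)) : ℝ) : ℂ) *
      besselFourier k f η = 𝓕 (f : E d → ℂ) η := by
    rw [besselFourier_apply, ← mul_assoc, ← ofReal_mul, ← rpow_add (by positivity),
      neg_add_cancel, rpow_zero, ofReal_one, one_mul]
  simp only [cancel]
  exact (f.continuous.fourierInv_fourier_eq f.integrable (𝓕 f).integrable).symm

theorem lintegral_comp_smul {V : Type*} [NormedAddCommGroup V] [NormedSpace ℝ V]
    [FiniteDimensional ℝ V] [MeasurableSpace V] [BorelSpace V] (μ : Measure V) [μ.IsAddHaarMeasure]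
    (f : V → ℝ≥0∞) {c : ℝ} (hc : c ≠ 0) :
    ∫⁻ x, f (c • x) ∂μ = ENNReal.ofReal |(c ^ Module.finrank ℝ V)⁻¹| * ∫⁻ x, f x ∂μ := by
  rw [← smul_eq_mul, ← lintegral_smul_measure, ← Measure.map_addHaar_smul μ hc]
  exact (lintegral_map_equiv f (Homeomorph.smulOfNeZero c hc).toMeasurableEquiv).symm

theorem measurable_stft {u : E d → ℂ} (hu : Measurable u) : Measurable (stft d u) := by
  rw [funext (stft_eq_gaussianSTFT u)]
  have dilate : Measurable fun z : P d ↦ (z.1, (2 * π)⁻¹ • z.2) := by fun_prop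
  simpa only [Function.comp_def] using (measurable_gaussianSTFT hu).comp dilate

theorem exists_lintegral_stft_rpow_le (hd : d ≠ 0) (hp1 : 1 < p) (hp2 : p ≤ 2) :
    ∃ C : ℝ≥0, ∀ f : SchwartzMap (E d) ℂ, ∫⁻ z, ‖stft d f z‖ₑ ^ p ≤
      C * ∫⁻ x, ‖bessel d (2 * d * (1 / p - 1 / 2)) f x‖ₑ ^ p := by
  have : NeZero d := ⟨hd⟩
  obtain ⟨C, hC⟩ := exists_lintegral_gaussianSTFT_rpow_le (V := E d) one_half_pos
    (by positivity : 0 < (2 * π) ^ 2) hp1 hp2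
  simp only [finrank_euclideanSpace_fin] at hC
  set k : ℝ := 2 * d * (1 / p - 1 / 2) with hk
  have half : k / 2 = d * (1 / p - 1 / 2) := by rw [hk]; ring
  refine ⟨(|(((2 * π)⁻¹) ^ d)⁻¹|).toNNReal * C, fun f ↦ ?_⟩
  rw [Measure.volume_eq_prod, lintegral_prod _
    ((measurable_stft f.continuous.measurable).enorm.pow_const p).aemeasurable]
  simp only [stft_eq_gaussianSTFT]
  calc
    _ = ENNReal.ofReal |(((2 * π)⁻¹) ^ d)⁻¹| *
        ∫⁻ x, ∫⁻ ν, ‖gaussianSTFT (1 / 2) f x ν‖ₑ ^ p := by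
      rw [← lintegral_const_mul' _ _ ENNReal.ofReal_ne_top]
      congr 1 with x
      rw [lintegral_comp_smul volume (fun ν ↦ ‖gaussianSTFT (1 / 2) f x ν‖ₑ ^ p) (by positivity),
        finrank_euclideanSpace_fin]
    _ ≤ ENNReal.ofReal |(((2 * π)⁻¹) ^ d)⁻¹| * (C * ∫⁻ x, ‖bessel d k f x‖ₑ ^ p) := by
      gcongr 1
      rw [← coe_fourierInv_besselFourier, SchwartzMap.fourierInv_coe,
        eq_fourierInv_mul_besselFourier (k := k) f, half]
      exact hC (besselFourier k f).integrable
    _ = _ := by rw [ENNReal.coe_mul, mul_assoc]; rfl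

theorem integral_norm_rpow_rpow_le_of_lintegral_le {α β F G : Type*} [MeasurableSpace α]
    [MeasurableSpace β] [NormedAddCommGroup F] [NormedAddCommGroup G] {μ : Measure α}
    {ν : Measure β} {u : α → F} {v : β → G} {C : ℝ≥0} (hp : 0 < p)
    (hv : MemLp v (ENNReal.ofReal p) ν)
    (h : ∫⁻ x, ‖u x‖ₑ ^ p ∂μ ≤ C * ∫⁻ y, ‖v y‖ₑ ^ p ∂ν) :
    (∫ x, ‖u x‖ ^ p ∂μ) ^ (1 / p) ≤ C ^ (1 / p) * (∫ y, ‖v y‖ ^ p ∂ν) ^ (1 / p) := by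
  have integrable : Integrable (fun y ↦ ‖v y‖ ^ p) ν := by
    simpa only [ENNReal.toReal_ofReal hp.le] using
      hv.integrable_norm_rpow (by simpa using hp) ENNReal.ofReal_ne_top
  have nonneg : 0 ≤ ∫ y, ‖v y‖ ^ p ∂ν := integral_nonneg fun _ ↦ by positivity
  simp only [enorm_rpow_eq_ofReal _ hp.le] at h
  rw [← ofReal_integral_eq_lintegral_ofReal integrable
    (Eventually.of_forall fun _ ↦ by positivity), ← ENNReal.ofReal_coe_nnreal,
    ← ENNReal.ofReal_mul C.coe_nonneg] at h
  rw [← mul_rpow C.coe_nonneg nonneg]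
  refine rpow_le_rpow (integral_nonneg fun _ ↦ by positivity) ?_ (by positivity)
  calc
    _ ≤ (∫⁻ x, ENNReal.ofReal ‖‖u x‖ ^ p‖ ∂μ).toReal :=
      (Real.le_norm_self _).trans (norm_integral_le_lintegral_norm fun x ↦ ‖u x‖ ^ p)
    _ = (∫⁻ x, ENNReal.ofReal (‖u x‖ ^ p) ∂μ).toReal := by
      simp only [norm_of_nonneg (rpow_nonneg (norm_nonneg _) p)]
    _ ≤ _ := ENNReal.toReal_le_of_le_ofReal (by positivity) h

theorem memLp_bessel (f : SchwartzMap (E d) ℂ) (q : ℝ≥0∞) : MemLp (bessel d k f) q := by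
  rw [← coe_fourierInv_besselFourier]
  exact SchwartzMap.memLp (μ := volume) _ q

end Normalisation

/-- the embedding `L^p_k ↪ M^p` for `1 < p ≤ 2`, `k = 2d(1/p - 1/2)`:
`‖V_g f‖_{L^p(ℝ^{2d})} ≤ C·‖(1-Δ)^{k/2} f‖_{L^p(ℝ^d)}` for Schwartz `f`. -/
theorem stmt6 (d : ℕ) (hd : 1 ≤ d) (p : ℝ) (hp1 : 1 < p) (hp2 : p ≤ 2)
    (k : ℝ) (hk : k = 2 * d * (1 / p - 1 / 2)) :
    ∃ C > (0 : ℝ), ∀ f : SchwartzMap (E d) ℂ,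
      (∫ z : P d, ‖stft d (⇑f) z‖ ^ p) ^ (1 / p) ≤
        C * (∫ x : E d, ‖bessel d k (⇑f) x‖ ^ p) ^ (1 / p) := by
  subst hk
  obtain ⟨C, hC⟩ := exists_lintegral_stft_rpow_le (d := d) (by lia) hp1 hp2
  refine ⟨(C + 1 : ℝ≥0) ^ (1 / p), by positivity, fun f ↦ ?_⟩
  exact integral_norm_rpow_rpow_le_of_lintegral_le (by linarith) (memLp_bessel f _)
    ((hC f).trans (by gcongr; exact le_self_add))
end
end

section
/- Let d ≥ 1 and 2 ≤ p < ∞. There exists a constant C > 0 such that for every Schwartz function f on ℝ^d: ‖V_g f‖_{L^p(ℝ^{2d})} ≤ C·‖f‖_{L^p(ℝ^d)}. -/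
open MeasureTheory Complex Real
open scoped ENNReal RealInnerProductSpace

noncomputable section

open scoped FourierTransform ComplexConjugate

/-!
For fixed `x`, the map `ξ ↦ V_g f(x, ξ)` is, up to a dilation, the Fourier transform of
`h = f · conj g(· - x)`, so the sup bound and Plancherel give `‖𝓕 h‖_p^p ≤ ‖h‖₁^(p-2) ‖h‖₂²`.
For general `h` this is not controlled by an `L^p` norm, but the window localises: `|g(· - x)|`
is a bounded weight of finite total mass, and Hölder with respect to that weight dominates both
the first and the second moment of `|f|`, whence
`‖h‖₁^(p-2) ‖h‖₂² ≤ ‖g‖_∞ ‖g‖₁^(p-2) ∫ |f(y)|^p |g(y - x)| dy`. Integrating in `x` replaces the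
weight by one more factor `‖g‖₁`. No interpolation is involved.
-/

section HolderInequalities

variable {α : Type*} [MeasurableSpace α] {μ : Measure α} {f w : α → ℝ≥0∞} {p : ℝ}

lemma lintegral_rpow_mul_le_rpow_mul_rpow (hf : AEMeasurable f μ) (hw : AEMeasurable w μ)
    {r : ℝ} (hr : 0 < r) (hrp : r ≤ p) :
    ∫⁻ a, f a ^ r * w a ∂μ ≤ (∫⁻ a, f a ^ p * w a ∂μ) ^ (r / p) * (∫⁻ a, w a ∂μ) ^ (1 - r / p) := by
  have hp : 0 < p := hr.trans_le hrp
  have hrp₀ : 0 ≤ r / p := by positivity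
  have hrp₁ : 0 ≤ 1 - r / p := sub_nonneg.2 ((div_le_one hp).2 hrp)
  calc ∫⁻ a, f a ^ r * w a ∂μ = ∫⁻ a, (f a ^ p * w a) ^ (r / p) * w a ^ (1 - r / p) ∂μ := by
        refine lintegral_congr fun a ↦ ?_
        rw [ENNReal.mul_rpow_of_nonneg _ _ hrp₀, ← ENNReal.rpow_mul, mul_div_cancel₀ r hp.ne',
          mul_assoc, ← ENNReal.rpow_add_of_nonneg _ _ hrp₀ hrp₁, add_sub_cancel, ENNReal.rpow_one]
    _ ≤ _ := ENNReal.lintegral_mul_norm_pow_le ((hf.pow_const p).mul hw) hw hrp₀ hrp₁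
        (add_sub_cancel _ _)

lemma lintegral_mul_rpow_mul_lintegral_mul_sq_le (hf : AEMeasurable f μ) (hw : AEMeasurable w μ)
    {M : ℝ≥0∞} (hM : ∀ᵐ a ∂μ, w a ≤ M) (hp : 2 ≤ p) :
    (∫⁻ a, f a * w a ∂μ) ^ (p - 2) * ∫⁻ a, (f a * w a) ^ 2 ∂μ ≤
      M * (∫⁻ a, w a ∂μ) ^ (p - 2) * ∫⁻ a, f a ^ p * w a ∂μ := by
  have hp₀ : 0 < p := by linarith
  have hp₂ : 0 ≤ p - 2 := sub_nonneg.2 hp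
  set A := ∫⁻ a, f a ^ p * w a ∂μ
  set W := ∫⁻ a, w a ∂μ
  have first_moment : ∫⁻ a, f a * w a ∂μ ≤ A ^ (1 / p) * W ^ (1 - 1 / p) := by
    simpa using lintegral_rpow_mul_le_rpow_mul_rpow hf hw one_pos (by linarith : 1 ≤ p)
  have second_moment : ∫⁻ a, (f a * w a) ^ 2 ∂μ ≤ M * (A ^ (2 / p) * W ^ (1 - 2 / p)) :=
    calc ∫⁻ a, (f a * w a) ^ 2 ∂μ ≤ ∫⁻ a, M * (f a ^ 2 * w a) ∂μ := by
          refine lintegral_mono_ae (hM.mono fun a ha ↦ ?_)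
          calc (f a * w a) ^ 2 = w a * (f a ^ 2 * w a) := by ring
            _ ≤ M * (f a ^ 2 * w a) := by gcongr
      _ = M * ∫⁻ a, f a ^ (2 : ℝ) * w a ∂μ := by
          simp_rw [ENNReal.rpow_two]
          exact lintegral_const_mul'' _ ((hf.pow_const 2).mul hw)
      _ ≤ _ := by
          gcongr
          exact lintegral_rpow_mul_le_rpow_mul_rpow hf hw two_pos hp
  have exponent_A : 1 / p * (p - 2) + 2 / p = 1 := by field_simp; ring
  have exponent_W : (1 - 1 / p) * (p - 2) + (1 - 2 / p) = p - 2 := by field_simp; ring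
  have h₁ : 0 ≤ 1 - 1 / p := sub_nonneg.2 ((div_le_one hp₀).2 (by linarith))
  have h₂ : 0 ≤ 1 - 2 / p := sub_nonneg.2 ((div_le_one hp₀).2 hp)
  calc _ ≤ (A ^ (1 / p) * W ^ (1 - 1 / p)) ^ (p - 2) *
          (M * (A ^ (2 / p) * W ^ (1 - 2 / p))) := by gcongr
    _ = M * (W ^ ((1 - 1 / p) * (p - 2)) * W ^ (1 - 2 / p)) *
          (A ^ (1 / p * (p - 2)) * A ^ (2 / p)) := by
        rw [ENNReal.mul_rpow_of_nonneg _ _ hp₂, ← ENNReal.rpow_mul, ← ENNReal.rpow_mul]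
        ring
    _ = M * W ^ (p - 2) * A := by
        rw [← ENNReal.rpow_add_of_nonneg _ _ (by positivity) h₂,
          ← ENNReal.rpow_add_of_nonneg _ _ (by positivity) (by positivity),
          exponent_A, exponent_W, ENNReal.rpow_one]

end HolderInequalities

section Translations

variable {G : Type*} [AddCommGroup G] [MeasurableSpace G] [MeasurableAdd₂ G] [MeasurableNeg G]
  {μ : Measure G} [SFinite μ] [μ.IsAddLeftInvariant] {f w : G → ℝ≥0∞}

lemma aemeasurable_mul_comp_sub (hf : AEMeasurable f μ) (hw : AEMeasurable w μ) :
    AEMeasurable (fun z : G × G ↦ f z.2 * w (z.2 - z.1)) (μ.prod μ) :=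
  hf.comp_snd.mul <| hw.comp_quasiMeasurePreserving <|
    (quasiMeasurePreserving_sub_of_right_invariant μ μ).comp
      Measure.measurePreserving_swap.quasiMeasurePreserving

lemma lintegral_lintegral_mul_comp_sub [μ.IsNegInvariant] (hf : AEMeasurable f μ)
    (hw : AEMeasurable w μ) :
    ∫⁻ x, ∫⁻ y, f y * w (y - x) ∂μ ∂μ = (∫⁻ y, f y ∂μ) * ∫⁻ y, w y ∂μ := by
  have translate_w (y : G) : AEMeasurable (fun x ↦ w (y - x)) μ :=
    hw.comp_quasiMeasurePreserving (quasiMeasurePreserving_sub_left μ y)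
  rw [lintegral_lintegral_swap (aemeasurable_mul_comp_sub hf hw)]
  simp_rw [lintegral_const_mul'' _ (translate_w _), lintegral_sub_left_eq_self]
  exact lintegral_mul_const'' _ hf

end Translations

section FourierTransform

variable {V F : Type*} [NormedAddCommGroup V] [InnerProductSpace ℝ V] [FiniteDimensional ℝ V]
  [MeasurableSpace V] [BorelSpace V] [NormedAddCommGroup F]

section NormedSpace

variable [NormedSpace ℂ F]

lemma fourier_eq_zero_of_not_integrable {f : V → F} (hf : ¬Integrable f) : 𝓕 f = 0 := by
  ext ξ
  exact integral_undef ((Real.fourierIntegral_convergent_iff ξ).not.2 hf)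

lemma enorm_fourier_le_lintegral_enorm (f : V → F) (ξ : V) :
    ‖𝓕 f ξ‖ₑ ≤ ∫⁻ y, ‖f y‖ₑ := by
  rw [Real.fourier_eq]
  refine (enorm_integral_le_lintegral_enorm _).trans_eq (lintegral_congr fun y ↦ ?_)
  simp only [← ofReal_norm, Circle.norm_smul]

end NormedSpace

variable [InnerProductSpace ℂ F] [CompleteSpace F]

lemma fourier_toLp_two_ae_eq {f : V → F} (hf₁ : Integrable f) (hf₂ : MemLp f 2) :
    (𝓕 (hf₂.toLp f) : Lp F 2) =ᵐ[volume] 𝓕 f := by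
  have continuous_fourier : Continuous (𝓕 f) :=
    VectorFourier.fourierIntegral_continuous Real.continuous_fourierChar
      (innerSL ℝ).continuous₂ hf₁
  refine ae_eq_of_integral_contDiff_smul_eq ((Lp.memLp _).locallyIntegrable one_le_two)
    continuous_fourier.locallyIntegrable fun φ hφ hφc ↦ ?_
  let ψ : SchwartzMap V ℂ := HasCompactSupport.toSchwartzMap
    (f := Complex.ofRealCLM ∘ φ) (hφc.comp_left rfl) (by fun_prop)
  have pairing := DFunLike.congr_fun (Lp.fourier_toTemperedDistribution_eq (hf₂.toLp f)) ψ
  rw [TemperedDistribution.fourier_apply, Lp.toTemperedDistribution_apply,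
    Lp.toTemperedDistribution_apply] at pairing
  calc ∫ ξ, φ ξ • (𝓕 (hf₂.toLp f) : Lp F 2 volume) ξ
      = ∫ ξ, ψ ξ • (𝓕 (hf₂.toLp f) : Lp F 2 volume) ξ := by simp [ψ]
    _ = ∫ y, 𝓕 ψ y • hf₂.toLp f y := pairing.symm
    _ = ∫ y, 𝓕 ψ y • f y := integral_congr_ae (hf₂.coeFn_toLp.mono fun y hy ↦ by simp only [hy])
    _ = ∫ ξ, ψ ξ • 𝓕 f ξ := by
        rw [SchwartzMap.fourier_coe]
        simpa using! VectorFourier.integral_fourierIntegral_smul_eq_flip (L := innerₗ V)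
          Real.continuous_fourierChar continuous_inner ψ.integrable hf₁
    _ = ∫ ξ, φ ξ • 𝓕 f ξ := by simp [ψ]

lemma eLpNorm_two_fourier_le (f : V → F) : eLpNorm (𝓕 f) 2 ≤ eLpNorm f 2 := by
  by_cases hf₁ : Integrable f
  swap
  · simp [fourier_eq_zero_of_not_integrable hf₁]
  by_cases hf₂ : eLpNorm f 2 volume = ∞
  · simp [hf₂]
  have memLp_two : MemLp f 2 := ⟨hf₁.aestronglyMeasurable, lt_top_iff_ne_top.2 hf₂⟩
  rw [← eLpNorm_congr_ae (fourier_toLp_two_ae_eq hf₁ memLp_two), ← Lp.enorm_def,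
    ← eLpNorm_congr_ae memLp_two.coeFn_toLp, ← Lp.enorm_def, ← ofReal_norm, ← ofReal_norm,
    Lp.norm_fourier_eq]

lemma lintegral_enorm_fourier_rpow_le (f : V → F) {p : ℝ} (hp : 2 ≤ p) :
    ∫⁻ ξ, ‖𝓕 f ξ‖ₑ ^ p ≤ (∫⁻ y, ‖f y‖ₑ) ^ (p - 2) * ∫⁻ y, ‖f y‖ₑ ^ 2 := by
  have hp₂ : 0 ≤ p - 2 := sub_nonneg.2 hp
  have plancherel : ∫⁻ ξ, ‖𝓕 f ξ‖ₑ ^ 2 ≤ ∫⁻ y, ‖f y‖ₑ ^ 2 := by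
    have eLpNorm_sq (g : V → F) : eLpNorm g 2 ^ 2 = ∫⁻ y, ‖g y‖ₑ ^ 2 := by
      simpa using eLpNorm_nnreal_pow_eq_lintegral (f := g) (μ := volume) (p := 2) two_ne_zero
    rw [← eLpNorm_sq, ← eLpNorm_sq]
    gcongr
    exact eLpNorm_two_fourier_le f
  by_cases hf : Integrable f
  swap
  · simp [fourier_eq_zero_of_not_integrable hf, ENNReal.zero_rpow_of_pos (two_pos.trans_le hp)]
  have l1_ne_top : (∫⁻ y, ‖f y‖ₑ) ^ (p - 2) ≠ ∞ :=
    ENNReal.rpow_ne_top_of_nonneg hp₂ hf.2.ne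
  calc ∫⁻ ξ, ‖𝓕 f ξ‖ₑ ^ p = ∫⁻ ξ, ‖𝓕 f ξ‖ₑ ^ (p - 2) * ‖𝓕 f ξ‖ₑ ^ 2 := by
        refine lintegral_congr fun ξ ↦ ?_
        rw [← ENNReal.rpow_two, ← ENNReal.rpow_add_of_nonneg _ _ hp₂ two_pos.le, sub_add_cancel]
    _ ≤ ∫⁻ ξ, (∫⁻ y, ‖f y‖ₑ) ^ (p - 2) * ‖𝓕 f ξ‖ₑ ^ 2 := by
        gcongr
        exact enorm_fourier_le_lintegral_enorm f _
    _ = (∫⁻ y, ‖f y‖ₑ) ^ (p - 2) * ∫⁻ ξ, ‖𝓕 f ξ‖ₑ ^ 2 := lintegral_const_mul' _ _ l1_ne_top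
    _ ≤ _ := by gcongr

end FourierTransform

section ShortTimeFourier

variable {V : Type*} [NormedAddCommGroup V] [InnerProductSpace ℝ V] [MeasurableSpace V]
  [BorelSpace V] [FiniteDimensional ℝ V] {f g : V → ℂ} {p : ℝ}

/-- The short-time Fourier transform `V_g f(x, ξ)` for an arbitrary window `g`, with the frequency
`ξ` normalised by the kernel `e^{-i⟨y, ξ⟩}` rather than Mathlib's `e^{-2πi⟨y, ξ⟩}`. -/
def shortTimeFourier (g f : V → ℂ) (x ξ : V) : ℂ :=
  ∫ y, f y * conj (g (y - x)) * cexp (-I * ⟪y, ξ⟫)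

lemma shortTimeFourier_eq_fourier (g f : V → ℂ) (x ξ : V) :
    shortTimeFourier g f x ξ = 𝓕 (fun y ↦ f y * conj (g (y - x))) ((2 * π)⁻¹ • ξ) := by
  rw [shortTimeFourier, Real.fourier_eq']
  refine integral_congr_ae (.of_forall fun y ↦ ?_)
  have phase : -I * ⟪y, ξ⟫ = ↑(-2 * π * ⟪y, (2 * π)⁻¹ • ξ⟫) * I := by
    rw [inner_smul_right]
    push_cast
    field_simp
  simp only [phase, smul_eq_mul, mul_comm]

lemma lintegral_comp_inv_smul (F : V → ℝ≥0∞) {r : ℝ} (hr : r ≠ 0) :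
    ∫⁻ ξ, F (r⁻¹ • ξ) = ENNReal.ofReal |r ^ Module.finrank ℝ V| * ∫⁻ ξ, F ξ := by
  rw [← (measurableEmbedding_const_smul₀ (inv_ne_zero hr)).lintegral_map,
    Measure.map_addHaar_smul volume (inv_ne_zero hr), lintegral_smul_measure, smul_eq_mul, inv_pow,
    inv_inv]

lemma lintegral_shortTimeFourier_right_rpow_le (hg : AEStronglyMeasurable g)
    (hf : AEStronglyMeasurable f) (hp : 2 ≤ p) (x : V) :
    ∫⁻ ξ, ‖shortTimeFourier g f x ξ‖ₑ ^ p ≤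
      ENNReal.ofReal |(2 * π) ^ Module.finrank ℝ V| *
        (eLpNorm g ∞ * (∫⁻ y, ‖g y‖ₑ) ^ (p - 2)) * ∫⁻ y, ‖f y‖ₑ ^ p * ‖g (y - x)‖ₑ := by
  have translation : MeasurePreserving (· - x : V → V) := measurePreserving_sub_right volume x
  have bounded : ∀ᵐ y, ‖g (y - x)‖ₑ ≤ eLpNorm g ∞ :=
    translation.quasiMeasurePreserving.ae (by simpa using enorm_ae_le_eLpNormEssSup g volume)
  simp_rw [shortTimeFourier_eq_fourier]
  rw [lintegral_comp_inv_smul (fun ξ ↦ ‖𝓕 (fun y ↦ f y * conj (g (y - x))) ξ‖ₑ ^ p)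
    (by positivity : 2 * π ≠ 0), mul_assoc]
  gcongr
  refine (lintegral_enorm_fourier_rpow_le _ hp).trans ?_
  simp only [enorm_mul, RCLike.enorm_conj]
  rw [← lintegral_sub_right_eq_self (fun y ↦ ‖g y‖ₑ) x]
  exact lintegral_mul_rpow_mul_lintegral_mul_sq_le hf.enorm
    (hg.comp_measurePreserving translation).enorm bounded hp

lemma lintegral_shortTimeFourier_rpow_le (hg : AEStronglyMeasurable g)
    (hf : AEStronglyMeasurable f) (hp : 2 ≤ p) :
    ∫⁻ z : V × V, ‖shortTimeFourier g f z.1 z.2‖ₑ ^ p ≤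
      ENNReal.ofReal |(2 * π) ^ Module.finrank ℝ V| *
        (eLpNorm g ∞ * (∫⁻ y, ‖g y‖ₑ) ^ (p - 1)) * ∫⁻ y, ‖f y‖ₑ ^ p := by
  have hfp : AEMeasurable (fun y ↦ ‖f y‖ₑ ^ p) := hf.enorm.pow_const p
  set c := ENNReal.ofReal |(2 * π) ^ Module.finrank ℝ V|
  set G := ∫⁻ y, ‖g y‖ₑ
  have window_power : G ^ (p - 2) * G = G ^ (p - 1) := by
    nth_rw 2 [← ENNReal.rpow_one G]
    rw [← ENNReal.rpow_add_of_nonneg _ _ (sub_nonneg.2 hp) zero_le_one]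
    ring_nf
  calc ∫⁻ z : V × V, ‖shortTimeFourier g f z.1 z.2‖ₑ ^ p
      ≤ ∫⁻ x, ∫⁻ ξ, ‖shortTimeFourier g f x ξ‖ₑ ^ p := lintegral_prod_le _
    _ ≤ ∫⁻ x, c * (eLpNorm g ∞ volume * G ^ (p - 2)) * ∫⁻ y, ‖f y‖ₑ ^ p * ‖g (y - x)‖ₑ :=
        lintegral_mono fun x ↦ lintegral_shortTimeFourier_right_rpow_le hg hf hp x
    _ = c * (eLpNorm g ∞ volume * G ^ (p - 2)) * ∫⁻ x, ∫⁻ y, ‖f y‖ₑ ^ p * ‖g (y - x)‖ₑ :=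
        lintegral_const_mul'' _ (aemeasurable_mul_comp_sub hfp hg.enorm).lintegral_prod_right'
    _ = c * (eLpNorm g ∞ volume * G ^ (p - 2)) * ((∫⁻ y, ‖f y‖ₑ ^ p) * G) := by
        rw [lintegral_lintegral_mul_comp_sub hfp hg.enorm]
    _ = c * (eLpNorm g ∞ volume * G ^ (p - 1)) * ∫⁻ y, ‖f y‖ₑ ^ p := by
        rw [← window_power]
        ring

end ShortTimeFourier

section Integrals

variable {α β F F' : Type*} [MeasurableSpace α] [MeasurableSpace β] [NormedAddCommGroup F]
  [NormedAddCommGroup F'] {μ : Measure α} {ν : Measure β} {f : α → F} {p : ℝ}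

lemma lintegral_enorm_rpow_eq_ofReal_integral (hp : 0 < p) (hf : MemLp f (ENNReal.ofReal p) μ) :
    ∫⁻ a, ‖f a‖ₑ ^ p ∂μ = ENNReal.ofReal (∫ a, ‖f a‖ ^ p ∂μ) := by
  have integrable : Integrable (fun a ↦ ‖f a‖ ^ p) μ := by
    simpa [hp.le] using hf.integrable_norm_rpow (by simpa using hp) ENNReal.ofReal_ne_top
  rw [ofReal_integral_eq_lintegral_ofReal integrable (.of_forall fun a ↦ by positivity)]
  simp_rw [← ENNReal.ofReal_rpow_of_nonneg (norm_nonneg _) hp.le, ofReal_norm]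

lemma integral_norm_rpow_le_of_lintegral_enorm_rpow_le {u : β → F'} {K : ℝ≥0∞} (hK : K ≠ ∞)
    (hp : 0 < p) (hf : MemLp f (ENNReal.ofReal p) μ)
    (h : ∫⁻ b, ‖u b‖ₑ ^ p ∂ν ≤ K * ∫⁻ a, ‖f a‖ₑ ^ p ∂μ) :
    (∫ b, ‖u b‖ ^ p ∂ν) ^ (1 / p) ≤ K.toReal ^ (1 / p) * (∫ a, ‖f a‖ ^ p ∂μ) ^ (1 / p) := by
  have integral_nonneg_f : 0 ≤ ∫ a, ‖f a‖ ^ p ∂μ := integral_nonneg fun a ↦ by positivity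
  rw [← Real.mul_rpow ENNReal.toReal_nonneg integral_nonneg_f]
  gcongr
  rw [← ENNReal.ofReal_le_ofReal_iff (by positivity)]
  calc ENNReal.ofReal (∫ b, ‖u b‖ ^ p ∂ν) ≤ ∫⁻ b, ‖u b‖ₑ ^ p ∂ν := by
        rw [← Real.enorm_of_nonneg (by positivity)]
        refine (enorm_integral_le_lintegral_enorm _).trans_eq (lintegral_congr fun b ↦ ?_)
        rw [Real.enorm_rpow_of_nonneg (norm_nonneg _) hp.le, enorm_norm]
    _ ≤ K * ∫⁻ a, ‖f a‖ₑ ^ p ∂μ := h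
    _ = ENNReal.ofReal (K.toReal * ∫ a, ‖f a‖ ^ p ∂μ) := by
        rw [lintegral_enorm_rpow_eq_ofReal_integral hp hf, ENNReal.ofReal_mul ENNReal.toReal_nonneg,
          ENNReal.ofReal_toReal hK]

end Integrals

section GaussianWindow

variable {V : Type*} [NormedAddCommGroup V]

/-- The Gaussian window `g(y) = e^{-|y|²/2}`, complex-valued so that it can serve as the window of
`shortTimeFourier`. -/
def gaussianWindow (y : V) : ℂ := Real.exp (-‖y‖ ^ 2 / 2)

lemma continuous_gaussianWindow : Continuous (gaussianWindow : V → ℂ) := by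
  unfold gaussianWindow
  fun_prop

lemma norm_gaussianWindow_le_one (y : V) : ‖gaussianWindow y‖ ≤ 1 := by
  rw [gaussianWindow, norm_real, Real.norm_of_nonneg (Real.exp_pos _).le, Real.exp_le_one_iff]
  exact div_nonpos_of_nonpos_of_nonneg (neg_nonpos.2 (sq_nonneg _)) zero_le_two

variable [InnerProductSpace ℝ V] [FiniteDimensional ℝ V] [MeasurableSpace V] [BorelSpace V]

lemma memLp_top_gaussianWindow : MemLp (gaussianWindow : V → ℂ) ∞ :=
  memLp_top_of_bound continuous_gaussianWindow.aestronglyMeasurable 1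
    (.of_forall norm_gaussianWindow_le_one)

lemma integrable_gaussianWindow : Integrable (gaussianWindow : V → ℂ) := by
  refine (GaussianFourier.integrable_cexp_neg_mul_sq_norm_add (V := V) (b := 1 / 2)
    (by norm_num) 0 0).congr (.of_forall fun y ↦ ?_)
  simp only [gaussianWindow]
  push_cast
  ring_nf

lemma stft_eq_shortTimeFourier (d : ℕ) (u : E d → ℂ) (z : P d) :
    stft d u z = shortTimeFourier gaussianWindow u z.1 z.2 := by
  refine integral_congr_ae (.of_forall fun y ↦ ?_)
  simp only [pkbar, gaussianWindow, conj_ofReal]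
  ring

end GaussianWindow

theorem stmt7_general {V : Type*} [NormedAddCommGroup V] [InnerProductSpace ℝ V]
    [FiniteDimensional ℝ V] [MeasurableSpace V] [BorelSpace V] {g : V → ℂ} (hg : Integrable g)
    (hg_top : MemLp g ∞) {p : ℝ} (hp : 2 ≤ p) :
    ∃ C > (0 : ℝ), ∀ f : V → ℂ, MemLp f (ENNReal.ofReal p) →
      (∫ z : V × V, ‖shortTimeFourier g f z.1 z.2‖ ^ p) ^ (1 / p) ≤
        C * (∫ x, ‖f x‖ ^ p) ^ (1 / p) := by
  set K := ENNReal.ofReal |(2 * π) ^ Module.finrank ℝ V| *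
    (eLpNorm g ∞ volume * (∫⁻ y, ‖g y‖ₑ) ^ (p - 1))
  have K_ne_top : K ≠ ∞ := ENNReal.mul_ne_top ENNReal.ofReal_ne_top <|
    ENNReal.mul_ne_top hg_top.2.ne (ENNReal.rpow_ne_top_of_nonneg (by linarith) hg.2.ne)
  refine ⟨K.toReal ^ (1 / p) + 1, by positivity, fun f hf ↦ ?_⟩
  have bound := integral_norm_rpow_le_of_lintegral_enorm_rpow_le K_ne_top (two_pos.trans_le hp) hf
    (lintegral_shortTimeFourier_rpow_le hg.1 hf.1 hp)
  refine bound.trans ?_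
  gcongr
  exact le_add_of_nonneg_right zero_le_one

/-- the embedding `L^p ↪ M^p` for `2 ≤ p < ∞`:
`‖V_g f‖_{L^p(ℝ^{2d})} ≤ C·‖f‖_{L^p(ℝ^d)}` for Schwartz `f`. -/
theorem stmt7 (d : ℕ) (hd : 1 ≤ d) (p : ℝ) (hp : 2 ≤ p) :
    ∃ C > (0 : ℝ), ∀ f : SchwartzMap (E d) ℂ,
      (∫ z : P d, ‖stft d (⇑f) z‖ ^ p) ^ (1 / p) ≤
        C * (∫ x : E d, ‖f x‖ ^ p) ^ (1 / p) := by
  obtain ⟨C, hC, h⟩ := stmt7_general (V := E d) integrable_gaussianWindow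
    memLp_top_gaussianWindow hp
  exact ⟨C, hC, fun f ↦ by simpa only [stft_eq_shortTimeFourier] using h f (f.memLp _)⟩
end
end
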